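/- arXiv:2507.13747 — 5 statements merged into one kernel-verified Lean document; each statement's English description precedes it below -/
import Mathlib

section
/- For every integer n ≥ 1 and every t > 0, the iterated integral η_n(t) = ∫_0^t (1/√s₁) ∫_{s₁}^t (1/√(s₂−s₁)) ⋯ ∫_{s_{n−1}}^t (1/√(s_n−s_{n−1})) ds_n ⋯ ds₂ ds₁ satisfies η_n(t) = v_n · t^{n/2}, where v_n is the volume of the unit Euclidean ball in ℝⁿ. -/
/-!
The iterated integral is a chain of Beta integrals. For `s ≤ t` one has, by induction on `n`,
`etaAux n s t = √π ^ n / Γ(n/2 + 1) * (t - s) ^ (n/2)` (`etaAux_eq`). The inductive step is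
`∫₀ᵃ x^{-1/2} (a - x)^{n/2} dx = a^{(n+1)/2} B(1/2, n/2 + 1)`, where
`B(1/2, n/2 + 1) = √π Γ(n/2 + 1) / Γ((n+1)/2 + 1)` by Euler's formula and `Γ(1/2) = √π`
(`integral_inv_sqrt_mul_rpow`); the Gamma factors telescope. Taking `s = 0`
gives `η_n(t)`, and `√π ^ n / Γ(n/2 + 1)` is the volume of the unit ball in `ℝⁿ`.
-/

open MeasureTheory

/-- The iterated integral `∫_s^t (u - s)^{-1/2} ⋯` with `n` levels:
`etaAux 0 s t = 1` and `etaAux (n+1) s t = ∫_s^t (u-s)^{-1/2} · etaAux n u t du`. -/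
noncomputable def etaAux : ℕ → ℝ → ℝ → ℝ
  | 0, _, _ => 1
  | n + 1, s, t => ∫ u in s..t, (1 / Real.sqrt (u - s)) * etaAux n u t

/-- `η_n(t) = ∫_0^t (1/√s₁) ∫_{s₁}^t (1/√(s₂−s₁)) ⋯ ∫_{s_{n−1}}^t (1/√(s_n−s_{n−1})) ds_n ⋯ ds₁`. -/
noncomputable def eta (n : ℕ) (t : ℝ) : ℝ := etaAux n 0 t

/-- Euler's formula for the Beta integral `B(1/2, β + 1)`, rescaled to the interval `[0, a]`. -/
lemma integral_inv_sqrt_mul_rpow {a β : ℝ} (ha : 0 < a) (hβ : 0 ≤ β) :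
    ∫ x in (0 : ℝ)..a, 1 / Real.sqrt x * (a - x) ^ β
      = a ^ (β + 1 / 2) * (Real.sqrt Real.pi * Real.Gamma (β + 1)
          / Real.Gamma (β + 1 / 2 + 1)) := by
  have key := Complex.betaIntegral_scaled ((1 / 2 : ℝ) : ℂ) ((β + 1 : ℝ) : ℂ) ha
  have hG := Complex.Gamma_mul_Gamma_eq_betaIntegral (s := ((1 / 2 : ℝ) : ℂ))
    (t := ((β + 1 : ℝ) : ℂ)) (by rw [Complex.ofReal_re]; norm_num)
    (by rw [Complex.ofReal_re]; positivity)
  have hpos : 0 < Real.Gamma (β + 1 / 2 + 1) := Real.Gamma_pos_of_pos (by positivity)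
  rw [← Complex.ofReal_add, Complex.Gamma_ofReal, Complex.Gamma_ofReal, Complex.Gamma_ofReal,
    Real.Gamma_one_half_eq, show (1 / 2 : ℝ) + (β + 1) = β + 1 / 2 + 1 by ring] at hG
  have hB : Complex.betaIntegral ((1 / 2 : ℝ) : ℂ) ((β + 1 : ℝ) : ℂ)
      = ((Real.sqrt Real.pi * Real.Gamma (β + 1) / Real.Gamma (β + 1 / 2 + 1) : ℝ) : ℂ) := by
    rw [Complex.ofReal_div (Real.sqrt Real.pi * _), eq_div_iff (by exact_mod_cast hpos.ne'), Complex.ofReal_mul, hG,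
      mul_comm]
  rw [hB, show ((1 / 2 : ℝ) : ℂ) + ((β + 1 : ℝ) : ℂ) - 1 = ((β + 1 / 2 : ℝ) : ℂ) by
    push_cast; ring, ← Complex.ofReal_cpow ha.le, ← Complex.ofReal_mul] at key
  apply Complex.ofReal_injective
  rw [← key, ← intervalIntegral.integral_ofReal]
  refine intervalIntegral.integral_congr fun x hx => ?_
  rw [Set.uIcc_of_le ha.le] at hx
  have h1 : ((1 / 2 : ℝ) : ℂ) - 1 = ((-(1 / 2) : ℝ) : ℂ) := by push_cast; norm_num
  have h2 : ((β + 1 : ℝ) : ℂ) - 1 = (β : ℂ) := by push_cast; ring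
  rw [h1, h2, ← Complex.ofReal_sub, ← Complex.ofReal_cpow hx.1,
    ← Complex.ofReal_cpow (sub_nonneg.2 hx.2), ← Complex.ofReal_mul, Real.rpow_neg hx.1,
    ← Real.sqrt_eq_rpow, one_div]

/-- Closed form of the iterated integral; the lower limit is arbitrary so that the induction on the
number of levels goes through. -/
lemma etaAux_eq (n : ℕ) {s t : ℝ} (hst : s ≤ t) :
    etaAux n s t
      = Real.sqrt Real.pi ^ n / Real.Gamma ((n : ℝ) / 2 + 1) * (t - s) ^ ((n : ℝ) / 2) := by
  induction n generalizing s with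
  | zero => simp [etaAux]
  | succ n ih =>
    have hexp : ((n + 1 : ℕ) : ℝ) / 2 = (n : ℝ) / 2 + 1 / 2 := by push_cast; ring
    have hpos : 0 < Real.Gamma ((n : ℝ) / 2 + 1) := Real.Gamma_pos_of_pos (by positivity)
    rw [hexp, etaAux]
    rcases hst.eq_or_lt with rfl | hlt
    · rw [intervalIntegral.integral_same, sub_self, Real.zero_rpow (by positivity), mul_zero]
    -- After inserting the induction hypothesis, translate by `s` to reach the Beta integral.
    have hcongr : ∫ u in s..t, 1 / Real.sqrt (u - s) * etaAux n u t
        = ∫ u in s..t, Real.sqrt Real.pi ^ n / Real.Gamma ((n : ℝ) / 2 + 1)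
            * (1 / Real.sqrt (u - s) * ((t - s) - (u - s)) ^ ((n : ℝ) / 2)) := by
      refine intervalIntegral.integral_congr fun u hu => ?_
      rw [Set.uIcc_of_le hst] at hu
      rw [ih hu.2, sub_sub_sub_cancel_right]
      ring
    rw [hcongr, intervalIntegral.integral_const_mul,
      intervalIntegral.integral_comp_sub_right
        (fun x => 1 / Real.sqrt x * ((t - s) - x) ^ ((n : ℝ) / 2)) s,
      sub_self, integral_inv_sqrt_mul_rpow (sub_pos.2 hlt) (by positivity)]
    rw [pow_succ]
    field_simp

/-- for every `n ≥ 1` and `t > 0`, `η_n(t) = v_n · t^{n/2}`, where `v_n` is the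
volume of the unit Euclidean ball in `ℝⁿ`. -/
theorem eta_eq_unitBallVolume_mul_rpow (n : ℕ) (hn : 1 ≤ n) (t : ℝ) (ht : 0 < t) :
    eta n t
      = (volume (Metric.closedBall (0 : EuclideanSpace ℝ (Fin n)) 1)).toReal
        * t ^ ((n : ℝ) / 2) := by
  have : Nonempty (Fin n) := ⟨⟨0, hn⟩⟩
  have hpos : 0 < Real.Gamma ((n : ℝ) / 2 + 1) := Real.Gamma_pos_of_pos (by positivity)
  rw [EuclideanSpace.volume_closedBall, Fintype.card_fin, ENNReal.ofReal_one, one_pow, one_mul,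
    ENNReal.toReal_ofReal (by positivity), eta, etaAux_eq n ht.le, sub_zero]
end

section
/- Let b : ℝ → ℝ be a bounded measurable function. For each integer n ≥ 1 and t > 0 define I_{n,1}(t) as the iterated integral over the simplex 0 < s₁ < ⋯ < s_n < t of ∫_{ℝⁿ} b(y₁)⋯b(y_n) · q'_{s₁}(y₁) q'_{s₂−s₁}(y₂−y₁) ⋯ q'_{s_n−s_{n−1}}(y_n−y_{n−1}) dy₁⋯dy_n. Then |I_{n,1}(t)| ≤ (2√π/√e)ⁿ / ⌊n/2⌋! · ‖b‖_∞ⁿ · t^{n/2}. -/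
/-!
The bound follows from the triangle inequality, without using any cancellation.

For fixed times `s` in the simplex, `|b| ≤ B` and integrating out `y_n, y_{n-1}, …, y₁` in turn
(each step is a translate of `∫ |q_d'| = √(2/π) d^{-1/2}`, see `lintegral_heatK'`) bounds the spatial
integral by `(B √(2/π))ⁿ ∏ (s_i - s_{i-1})^{-1/2}` (`lintegral_prod_heatK'`). What remains is the
Dirichlet integral `∫ ∏ (s_i - s_{i-1})^{-1/2} ds = Γ(1/2)ⁿ / Γ(n/2 + 1) · t^{n/2}`
(`lintegral_dirichlet`), computed by integrating out `s_n, …, s₁` with the Beta integral. Together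
these give the constant `√2ⁿ / Γ(n/2 + 1)`, which is at most `(2√π/√e)ⁿ / ⌊n/2⌋!` (`const_le`).

All estimates are made with `[0, ∞]`-valued integrals, and only the inequality in Tonelli's theorem
is used, so no integrability or measurability of the integrands over `ℝⁿ` has to be checked.
-/

open MeasureTheory

/-- The heat kernel `q_t(x) = exp(−x²/(2t))/√(2πt)`. -/
noncomputable def heatK (t x : ℝ) : ℝ := Real.exp (-x ^ 2 / (2 * t)) / Real.sqrt (2 * Real.pi * t)

/-- `q_t'(x)`, the spatial derivative of the heat kernel. -/
noncomputable def heatK' (t x : ℝ) : ℝ := deriv (fun y => heatK t y) x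

/-- The value of `f` at the index preceding `i`, with the convention that it is `0` for `i = 0`
(i.e. `s₀ = 0`, `y₀ = 0`). -/
def prev {n : ℕ} (f : Fin n → ℝ) (i : Fin n) : ℝ :=
  if i.val = 0 then 0 else f ⟨i.val - 1, Nat.lt_of_le_of_lt (Nat.sub_le _ _) i.isLt⟩

/-- The open simplex `{0 < s₁ < s₂ < ⋯ < s_n < t}`. -/
def simplex (n : ℕ) (t : ℝ) : Set (Fin n → ℝ) :=
  {s | StrictMono s ∧ ∀ i, s i ∈ Set.Ioo 0 t}


/-! ### Splitting off the last coordinate -/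

/-- The last coordinate of a vector, with the convention that it is `0` for the empty vector
(so that `s₀ = 0`, as in `prev`). -/
def lastCoord {n : ℕ} (f : Fin n → ℝ) : ℝ :=
  if h : n = 0 then 0 else f ⟨n - 1, by omega⟩

lemma prev_snoc_castSucc {n : ℕ} (f : Fin n → ℝ) (z : ℝ) (i : Fin n) :
    prev (Fin.snoc f z : Fin (n + 1) → ℝ) i.castSucc = prev f i := by
  unfold prev
  by_cases h : i.val = 0
  · simp [h]
  · have h2 : i.val - 1 < n := by omega
    have e : (⟨i.castSucc.val - 1, by simp only [Fin.val_castSucc]; omega⟩ : Fin (n + 1))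
        = Fin.castSucc ⟨i.val - 1, h2⟩ := by ext; simp
    simp only [Fin.val_castSucc, h, if_false]
    exact (congrArg _ e).trans (Fin.snoc_castSucc (α := fun _ => ℝ) z f ⟨i.val - 1, h2⟩)

lemma prev_snoc_last {n : ℕ} (f : Fin n → ℝ) (z : ℝ) :
    prev (Fin.snoc f z : Fin (n + 1) → ℝ) (Fin.last n) = lastCoord f := by
  unfold prev lastCoord
  by_cases h : n = 0
  · simp [h]
  · have h2 : n - 1 < n := by omega
    have e : (⟨(Fin.last n).val - 1, by simp only [Fin.val_last]; omega⟩ : Fin (n + 1))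
        = Fin.castSucc ⟨n - 1, h2⟩ := by ext; simp
    simp only [Fin.val_last, h, if_false, dif_neg, not_false_eq_true]
    exact (congrArg _ e).trans (Fin.snoc_castSucc (α := fun _ => ℝ) z f ⟨n - 1, h2⟩)

lemma lastCoord_snoc {n : ℕ} (f : Fin n → ℝ) (z : ℝ) :
    lastCoord (Fin.snoc f z : Fin (n + 1) → ℝ) = z := by
  unfold lastCoord
  rw [dif_neg (by omega)]
  exact Fin.snoc_last (α := fun _ => ℝ) z f

/-- Tonelli's inequality splitting off the last coordinate. As an inequality it needs no
measurability of the integrand. -/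
lemma lintegral_le_lintegral_snoc {n : ℕ} (f : (Fin (n + 1) → ℝ) → ENNReal) :
    ∫⁻ y, f y ≤ ∫⁻ y : Fin n → ℝ, ∫⁻ z : ℝ, f (Fin.snoc y z) := by
  have h1 := (volume_preserving_piFinSuccAbove (fun _ : Fin (n + 1) => ℝ) (Fin.last n)).symm
  have h2 : MeasurePreserving (Prod.swap : (Fin n → ℝ) × ℝ → ℝ × (Fin n → ℝ))
      (volume.prod volume) (volume.prod volume) := Measure.measurePreserving_swap
  have e2 : MeasurableEmbedding (Prod.swap : (Fin n → ℝ) × ℝ → ℝ × (Fin n → ℝ)) :=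
    MeasurableEquiv.prodComm.measurableEmbedding
  rw [← h1.lintegral_comp_emb (MeasurableEquiv.measurableEmbedding _) f]
  rw [Measure.volume_eq_prod, ← h2.lintegral_comp_emb e2]
  refine (lintegral_prod_le _).trans (le_of_eq ?_)
  refine lintegral_congr fun y => lintegral_congr fun z => ?_
  congr 1
  exact Fin.insertNth_last' z y

/-! ### The spatial integral -/

lemma deriv_heatK (t x : ℝ) :
    heatK' t x = -(x / t) * (Real.exp (-(1 / (2 * t)) * x ^ 2) / Real.sqrt (2 * Real.pi * t)) := by
  unfold heatK' heatK
  have h : HasDerivAt (fun y : ℝ => -y ^ 2 / (2 * t)) (-(2 * x) / (2 * t)) x := by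
    have := ((hasDerivAt_pow 2 x).neg).div_const (2 * t)
    simpa using this
  rw [(h.exp.div_const _).deriv]
  have e : -x ^ 2 / (2 * t) = -(1 / (2 * t)) * x ^ 2 := by ring
  rw [e]
  have : -(2 * x) / (2 * t) = -(x / t) := by
    rw [neg_div, mul_div_mul_left _ _ two_ne_zero]
  rw [this]; ring

/-- The `L¹` norm of `q_d'` is `2 q_d(0) = √(2/π) d^{-1/2}`. -/
lemma lintegral_heatK' {d : ℝ} (hd : 0 < d) :
    ∫⁻ x, ‖heatK' d x‖ₑ
      = ENNReal.ofReal (Real.sqrt (2 / Real.pi)) * ENNReal.ofReal (d ^ (-(1 / 2) : ℝ)) := by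
  have hb : 0 < 1 / (2 * d) := by positivity
  have hpi := Real.pi_pos
  set c : ℝ := 1 / (d * Real.sqrt (2 * Real.pi * d)) with hc
  have hc0 : 0 ≤ c := by positivity
  have hn : ∀ x, ‖heatK' d x‖ = c * (|x| * Real.exp (-(1 / (2 * d)) * |x| ^ 2)) := by
    intro x
    rw [deriv_heatK, norm_mul, norm_neg, norm_div, norm_div, Real.norm_eq_abs, Real.norm_eq_abs,
      Real.norm_eq_abs, Real.norm_eq_abs, abs_of_pos hd, Real.abs_exp, sq_abs,
      abs_of_nonneg (Real.sqrt_nonneg _), hc]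
    field_simp
  have hint : Integrable (fun x => ‖heatK' d x‖) := by
    have : Integrable (fun x => c * ‖x * Real.exp (-(1 / (2 * d)) * x ^ 2)‖) :=
      ((integrable_mul_exp_neg_mul_sq hb).norm).const_mul c
    refine this.congr (Filter.Eventually.of_forall fun x => ?_)
    simp only [hn]
    rw [norm_mul, Real.norm_eq_abs, Real.norm_eq_abs, Real.abs_exp, sq_abs]
  have h1 : ∫⁻ x, ‖heatK' d x‖ₑ = ENNReal.ofReal (∫ x, ‖heatK' d x‖) := by
    rw [ofReal_integral_eq_lintegral_ofReal hint (Filter.Eventually.of_forall fun x => norm_nonneg _)]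
    simp_rw [ofReal_norm]
  rw [h1, ← ENNReal.ofReal_mul (Real.sqrt_nonneg _)]
  congr 1
  simp_rw [hn]
  rw [integral_const_mul, integral_comp_abs (f := fun x => x * Real.exp (-(1 / (2 * d)) * x ^ 2))]
  have h2 := integral_rpow_mul_exp_neg_mul_rpow (p := 2) (q := 1) (b := 1 / (2 * d))
    (by norm_num) (by norm_num) hb
  have h3 : ∫ x in Set.Ioi (0 : ℝ), x * Real.exp (-(1 / (2 * d)) * x ^ 2) = d := by
    have : ∫ x in Set.Ioi (0 : ℝ), x * Real.exp (-(1 / (2 * d)) * x ^ 2)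
        = ∫ x in Set.Ioi (0 : ℝ), x ^ (1 : ℝ) * Real.exp (-(1 / (2 * d)) * x ^ (2 : ℝ)) := by
      refine integral_congr_ae (Filter.Eventually.of_forall fun x => ?_)
      simp
    rw [this, h2]
    norm_num [Real.rpow_neg_one]
    ring
  rw [h3, hc, Real.rpow_neg hd.le, ← Real.sqrt_eq_rpow]
  rw [mul_assoc 2 Real.pi d, Real.sqrt_mul (by norm_num), Real.sqrt_mul hpi.le,
    Real.sqrt_div (by norm_num)]
  have h4 : Real.sqrt 2 * Real.sqrt 2 = 2 := Real.mul_self_sqrt (by norm_num)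
  field_simp
  nlinarith

/-- The spatial integral is bounded by a product: integrating out `y_n` first gives a constant independent of
`y_{n-1}`, and so on down to `y₁`. -/
lemma lintegral_prod_heatK' (n : ℕ) (d : Fin n → ℝ) (hd : ∀ i, 0 < d i) :
    ∫⁻ y : Fin n → ℝ, ∏ i, ‖heatK' (d i) (y i - prev y i)‖ₑ
      ≤ ∏ i, (ENNReal.ofReal (Real.sqrt (2 / Real.pi)) *
          ENNReal.ofReal (d i ^ (-(1 / 2) : ℝ))) := by
  induction n with
  | zero => simp [volume_pi]
  | succ n ih =>
    refine (lintegral_le_lintegral_snoc _).trans ?_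
    rw [Fin.prod_univ_castSucc]
    have key : ∀ y : Fin n → ℝ,
        ∫⁻ z : ℝ, ∏ i, ‖heatK' (d i) ((Fin.snoc y z : Fin (n + 1) → ℝ) i
          - prev (Fin.snoc y z : Fin (n + 1) → ℝ) i)‖ₑ
        = (∏ i : Fin n, ‖heatK' (d i.castSucc) (y i - prev y i)‖ₑ) *
          (ENNReal.ofReal (Real.sqrt (2 / Real.pi)) *
            ENNReal.ofReal (d (Fin.last n) ^ (-(1 / 2) : ℝ))) := by
      intro y
      simp_rw [Fin.prod_univ_castSucc, prev_snoc_castSucc, prev_snoc_last, Fin.snoc_castSucc,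
        Fin.snoc_last]
      rw [lintegral_const_mul' _ _ (ENNReal.prod_ne_top fun i _ => enorm_ne_top),
        lintegral_sub_right_eq_self (fun x => ‖heatK' (d (Fin.last n)) x‖ₑ),
        lintegral_heatK' (hd _)]
    simp_rw [key]
    rw [lintegral_mul_const' _ _ (ENNReal.mul_ne_top ENNReal.ofReal_ne_top ENNReal.ofReal_ne_top)]
    gcongr
    exact ih (fun i => d i.castSucc) (fun i => hd _)

/-! ### The Dirichlet integral over the simplex -/

/-- The Beta integral, rescaled to the interval `(u, t)`. -/
lemma lintegral_beta_Ioo {u t a : ℝ} (hut : u < t) (ha : 0 ≤ a) :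
    ∫⁻ z, (Set.Ioo u t).indicator
        (fun z => ENNReal.ofReal ((z - u) ^ (-(1 / 2) : ℝ)) * ENNReal.ofReal ((t - z) ^ a)) z
      = ENNReal.ofReal (ProbabilityTheory.beta (1 / 2) (a + 1) * (t - u) ^ (a + 1 / 2)) := by
  have hl : 0 < t - u := sub_pos.2 hut
  have hβ := ProbabilityTheory.beta_pos (α := 1 / 2) (β := a + 1) (by norm_num) (by linarith)
  set F := (Set.Ioo u t).indicator
    (fun z => ENNReal.ofReal ((z - u) ^ (-(1 / 2) : ℝ)) * ENNReal.ofReal ((t - z) ^ a)) with hF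
  rw [← lintegral_add_right_eq_self F u]
  rw [← Real.smul_map_volume_mul_left hl.ne', lintegral_smul_measure,
    (measurableEmbedding_mulLeft₀ hl.ne').lintegral_map]
  have key : ∀ x, F ((t - u) * x + u)
      = ENNReal.ofReal (ProbabilityTheory.beta (1 / 2) (a + 1) * (t - u) ^ (a - 1 / 2))
        * ProbabilityTheory.betaPDF (1 / 2) (a + 1) x := by
    intro x
    by_cases hx : 0 < x ∧ x < 1
    · have hmem : (t - u) * x + u ∈ Set.Ioo u t := by
        constructor
        · nlinarith [mul_pos hl hx.1]
        · nlinarith [mul_pos hl (sub_pos.2 hx.2)]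
      rw [hF, Set.indicator_of_mem hmem, ProbabilityTheory.betaPDF_of_pos_lt_one hx.1 hx.2,
        ← ENNReal.ofReal_mul (Real.rpow_nonneg (by linarith [hmem.1]) _),
        ← ENNReal.ofReal_mul (by positivity)]
      congr 1
      have e1 : (t - u) * x + u - u = (t - u) * x := by ring
      have e2 : t - ((t - u) * x + u) = (t - u) * (1 - x) := by ring
      rw [e1, e2, Real.mul_rpow hl.le hx.1.le, Real.mul_rpow hl.le (by linarith [hx.2]),
        sub_eq_add_neg a, Real.rpow_add hl]
      have e3 : (1 / 2 - 1 : ℝ) = -(1 / 2) := by norm_num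
      have e4 : a + 1 - 1 = a := by ring
      rw [e3, e4]
      field_simp
    · have hmem : (t - u) * x + u ∉ Set.Ioo u t := by
        intro h
        apply hx
        constructor
        · have := h.1
          exact pos_of_mul_pos_right (by linarith : 0 < (t - u) * x) hl.le
        · have := h.2
          have h5 : 0 < (t - u) * (1 - x) := by nlinarith
          linarith [pos_of_mul_pos_right h5 hl.le]
      rw [hF, Set.indicator_of_notMem hmem, ProbabilityTheory.betaPDF_eq, if_neg hx]
      simp
  simp_rw [key]
  rw [lintegral_const_mul' _ _ ENNReal.ofReal_ne_top,
    ProbabilityTheory.lintegral_betaPDF_eq_one (by norm_num) (by linarith), mul_one, smul_eq_mul,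
    ← ENNReal.ofReal_mul (abs_nonneg _), abs_of_pos hl]
  congr 1
  have : a + 1 / 2 = 1 + (a - 1 / 2) := by ring
  rw [this, Real.rpow_add hl, Real.rpow_one]
  ring

lemma snoc_mem_simplex {n : ℕ} {t z : ℝ} {s : Fin n → ℝ}
    (h : (Fin.snoc s z : Fin (n + 1) → ℝ) ∈ simplex (n + 1) t) :
    s ∈ simplex n t ∧ z ∈ Set.Ioo (lastCoord s) t := by
  obtain ⟨hm, hI⟩ := h
  have e1 : ∀ i : Fin n, (Fin.snoc s z : Fin (n + 1) → ℝ) i.castSucc = s i :=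
    fun i => Fin.snoc_castSucc (α := fun _ => ℝ) z s i
  have e2 : (Fin.snoc s z : Fin (n + 1) → ℝ) (Fin.last n) = z :=
    Fin.snoc_last (α := fun _ => ℝ) z s
  refine ⟨⟨fun i j hij => ?_, fun i => ?_⟩, ?_, ?_⟩
  · rw [← e1 i, ← e1 j]; exact hm (by simpa using hij)
  · rw [← e1 i]; exact hI _
  · unfold lastCoord
    split_ifs with h0
    · rw [← e2]; exact (hI _).1
    · have := hm (Fin.castSucc_lt_last (⟨n - 1, by omega⟩ : Fin n))
      rwa [e1, e2] at this
  · rw [← e2]; exact (hI _).2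

lemma lastCoord_lt {n : ℕ} {t : ℝ} (ht : 0 < t) {s : Fin n → ℝ} (h : s ∈ simplex n t) :
    lastCoord s < t := by
  unfold lastCoord
  split_ifs with h0
  · exact ht
  · exact (h.2 _).2

lemma sub_prev_pos {n : ℕ} {t : ℝ} {s : Fin n → ℝ} (h : s ∈ simplex n t) (i : Fin n) :
    0 < s i - prev s i := by
  unfold prev
  split_ifs with h0
  · simpa using (h.2 i).1
  · exact sub_pos.2 (h.1 (by rw [Fin.lt_def]; simp; omega))

lemma measurableSet_simplex (n : ℕ) (t : ℝ) : MeasurableSet (simplex n t) := by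
  have : simplex n t = (⋂ (i : Fin n) (j : Fin n) (_ : i < j), {s | s i < s j})
      ∩ ⋂ i : Fin n, {s | s i ∈ Set.Ioo 0 t} := by
    ext s
    simp [simplex, StrictMono]
  rw [this]
  refine MeasurableSet.inter ?_ ?_
  · refine MeasurableSet.iInter fun i => MeasurableSet.iInter fun j => MeasurableSet.iInter fun _ => ?_
    exact measurableSet_lt (measurable_pi_apply i) (measurable_pi_apply j)
  · exact MeasurableSet.iInter fun i => measurable_pi_apply i measurableSet_Ioo

/-- Upper bound by the Dirichlet integral formula over the simplex. The extra weight `(t - s_n)^a` is what makes the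
induction close: integrating out `s_n` raises the exponent `a` by `1/2`. -/
lemma lintegral_dirichlet (n : ℕ) {t : ℝ} (ht : 0 < t) : ∀ {a : ℝ}, 0 ≤ a →
    ∫⁻ s, (simplex n t).indicator (fun s =>
        (∏ i, ENNReal.ofReal ((s i - prev s i) ^ (-(1 / 2) : ℝ)))
          * ENNReal.ofReal ((t - lastCoord s) ^ a)) s
      ≤ ENNReal.ofReal (Real.Gamma (1 / 2) ^ n * Real.Gamma (a + 1) / Real.Gamma (a + 1 + n / 2)
          * t ^ (a + n / 2)) := by
  induction n with
  | zero =>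
    intro a ha
    have : Real.Gamma (a + 1) ≠ 0 := (Real.Gamma_pos_of_pos (by linarith)).ne'
    have hs : simplex 0 t = Set.univ := by
      ext s
      simp [simplex, StrictMono]
    simp [volume_pi, hs, lastCoord, this]
  | succ n ih =>
    intro a ha
    refine (lintegral_le_lintegral_snoc _).trans ?_
    have hg1 := Real.Gamma_pos_of_pos (show 0 < a + 1 by linarith)
    have hg2 := Real.Gamma_pos_of_pos (show 0 < a + 1 + 1 / 2 by linarith)
    have hg3 := Real.Gamma_pos_of_pos (show (0 : ℝ) < 1 / 2 by norm_num)
    have hβ := ProbabilityTheory.beta_pos (α := 1 / 2) (β := a + 1) (by norm_num) (by linarith)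
    have key : ∀ s : Fin n → ℝ,
        ∫⁻ z : ℝ, (simplex (n + 1) t).indicator (fun s =>
          (∏ i, ENNReal.ofReal ((s i - prev s i) ^ (-(1 / 2) : ℝ)))
            * ENNReal.ofReal ((t - lastCoord s) ^ a)) (Fin.snoc s z)
        ≤ ENNReal.ofReal (ProbabilityTheory.beta (1 / 2) (a + 1)) *
          (simplex n t).indicator (fun s =>
            (∏ i, ENNReal.ofReal ((s i - prev s i) ^ (-(1 / 2) : ℝ)))
              * ENNReal.ofReal ((t - lastCoord s) ^ (a + 1 / 2))) s := by
      intro s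
      by_cases hs : s ∈ simplex n t
      · rw [Set.indicator_of_mem hs]
        have hlt := lastCoord_lt ht hs
        calc _ ≤ ∫⁻ z : ℝ, (∏ i, ENNReal.ofReal ((s i - prev s i) ^ (-(1 / 2) : ℝ))) *
              (Set.Ioo (lastCoord s) t).indicator (fun z =>
                ENNReal.ofReal ((z - lastCoord s) ^ (-(1 / 2) : ℝ))
                  * ENNReal.ofReal ((t - z) ^ a)) z := by
              refine lintegral_mono fun z => ?_
              by_cases hz : (Fin.snoc s z : Fin (n + 1) → ℝ) ∈ simplex (n + 1) t
              · rw [Set.indicator_of_mem hz, Set.indicator_of_mem (snoc_mem_simplex hz).2,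
                  Fin.prod_univ_castSucc, lastCoord_snoc]
                simp_rw [prev_snoc_castSucc, prev_snoc_last, Fin.snoc_castSucc, Fin.snoc_last]
                rw [mul_assoc]
              · rw [Set.indicator_of_notMem hz]
                exact zero_le
          _ = _ := by
              rw [lintegral_const_mul' _ _ (ENNReal.prod_ne_top fun i _ => ENNReal.ofReal_ne_top),
                lintegral_beta_Ioo hlt ha, ENNReal.ofReal_mul hβ.le]
              ring
      · rw [Set.indicator_of_notMem hs, mul_zero]
        refine le_of_eq ((lintegral_congr fun z => ?_).trans lintegral_zero)
        exact Set.indicator_of_notMem (fun hz => hs (snoc_mem_simplex hz).1) _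
    refine (lintegral_mono key).trans ?_
    rw [lintegral_const_mul' _ _ ENNReal.ofReal_ne_top]
    refine (mul_le_mul_right (ih (a := a + 1 / 2) (by linarith)) _).trans (le_of_eq ?_)
    rw [← ENNReal.ofReal_mul hβ.le]
    congr 1
    have e1 : a + 1 / 2 + 1 + (n : ℝ) / 2 = a + 1 + ((n + 1 : ℕ) : ℝ) / 2 := by push_cast; ring
    have e2 : a + 1 / 2 + (n : ℝ) / 2 = a + ((n + 1 : ℕ) : ℝ) / 2 := by push_cast; ring
    have e3 : a + 1 / 2 + 1 = a + 1 + 1 / 2 := by ring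
    have e4 : (1 / 2 + (a + 1) : ℝ) = a + 1 + 1 / 2 := by ring
    rw [e1, e2, e3, ProbabilityTheory.beta, e4, pow_succ]
    field_simp

/-! ### Comparison of the constants -/

lemma sqrt_two_le : Real.sqrt 2 ≤ 2 * Real.sqrt Real.pi / Real.sqrt (Real.exp 1) := by
  rw [le_div_iff₀ (by positivity), ← Real.sqrt_mul (by norm_num)]
  refine Real.sqrt_le_iff.2 ⟨by positivity, ?_⟩
  rw [mul_pow, Real.sq_sqrt Real.pi_pos.le]
  linarith [Real.pi_gt_three, Real.exp_one_lt_d9]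

lemma sqrt_two_le' :
    Real.sqrt 2 ≤ 2 * Real.sqrt Real.pi / Real.sqrt (Real.exp 1) * (Real.sqrt Real.pi / 2) := by
  have h : 2 * Real.sqrt Real.pi / Real.sqrt (Real.exp 1) * (Real.sqrt Real.pi / 2)
      = Real.pi / Real.sqrt (Real.exp 1) := by
    have := Real.mul_self_sqrt Real.pi_pos.le
    field_simp
    nlinarith
  rw [h, le_div_iff₀ (by positivity), ← Real.sqrt_mul (by norm_num)]
  refine Real.sqrt_le_iff.2 ⟨Real.pi_pos.le, ?_⟩
  nlinarith [Real.pi_gt_three, Real.exp_one_lt_d9]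

lemma Gamma_half_ge (k : ℕ) :
    Real.sqrt Real.pi / 2 * (k.factorial : ℝ) ≤ Real.Gamma (k + 1 / 2 + 1) := by
  induction k with
  | zero =>
    rw [Real.Gamma_add_one (by norm_num)]
    norm_num [Real.Gamma_one_half_eq]
    linarith
  | succ k ih =>
    rw [Real.Gamma_add_one (by positivity), Nat.factorial_succ]
    push_cast
    have e : (k : ℝ) + 1 + 1 / 2 = k + 1 / 2 + 1 := by ring
    rw [e]
    have h1 : (k + 1 : ℝ) ≤ k + 1 / 2 + 1 := by linarith
    calc _ = (k + 1 : ℝ) * (Real.sqrt Real.pi / 2 * (k.factorial : ℝ)) := by ring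
      _ ≤ _ := by gcongr

/-- The sharp constant `√2ⁿ / Γ(n/2 + 1)` is dominated by the stated one. For odd `n = 2k + 1` the
loss in `Γ(k + 3/2) ≥ (√π/2) k!` is absorbed by one factor of `2√π/√e`. -/
lemma const_le (n : ℕ) :
    Real.sqrt 2 ^ n / Real.Gamma (n / 2 + 1)
      ≤ (2 * Real.sqrt Real.pi / Real.sqrt (Real.exp 1)) ^ n / ((n / 2).factorial : ℝ) := by
  have hG : 0 < Real.Gamma ((n : ℝ) / 2 + 1) := Real.Gamma_pos_of_pos (by positivity)
  set C := 2 * Real.sqrt Real.pi / Real.sqrt (Real.exp 1) with hC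
  have hC1 : Real.sqrt 2 ≤ C := sqrt_two_le
  have hC2 : Real.sqrt 2 ≤ C * (Real.sqrt Real.pi / 2) := sqrt_two_le'
  have hC0 : 0 ≤ C := by positivity
  rw [div_le_div_iff₀ hG (by positivity)]
  obtain ⟨k, hk | hk⟩ := Nat.even_or_odd' n
  · have e1 : n / 2 = k := by omega
    have e2 : (n : ℝ) / 2 = k := by rw [hk]; push_cast; ring
    rw [e1, e2, Real.Gamma_nat_eq_factorial]
    gcongr
  · have e1 : n / 2 = k := by omega
    have e2 : (n : ℝ) / 2 + 1 = k + 1 / 2 + 1 := by rw [hk]; push_cast; ring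
    rw [e1, e2, hk, pow_succ, pow_succ]
    calc Real.sqrt 2 ^ (2 * k) * Real.sqrt 2 * (k.factorial : ℝ)
        ≤ C ^ (2 * k) * (C * (Real.sqrt Real.pi / 2)) * (k.factorial : ℝ) := by gcongr
      _ = C ^ (2 * k) * C * (Real.sqrt Real.pi / 2 * (k.factorial : ℝ)) := by ring
      _ ≤ _ := by gcongr; exact Gamma_half_ge k

/-! ### The bound on the iterated integral -/

/-- let `b : ℝ → ℝ` be bounded (by `B`) and measurable, and for `n ≥ 1`, `t > 0`,
let `I_{n,1}(t)` be the integral over the simplex `0 < s₁ < ⋯ < s_n < t` of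
`∫_{ℝⁿ} b(y₁)⋯b(y_n) · q'_{s₁}(y₁) q'_{s₂−s₁}(y₂−y₁) ⋯ q'_{s_n−s_{n−1}}(y_n−y_{n−1}) dy`.
Then `|I_{n,1}(t)| ≤ (2√π/√e)ⁿ / ⌊n/2⌋! · ‖b‖_∞ⁿ · t^{n/2}`. -/
theorem abs_I_n_one_le (b : ℝ → ℝ) (hb : Measurable b) (B : ℝ) (hB : ∀ x, |b x| ≤ B)
    (n : ℕ) (hn : 1 ≤ n) (t : ℝ) (ht : 0 < t) :
    |∫ s in simplex n t,
        (∫ y : Fin n → ℝ, (∏ i, b (y i)) * ∏ i, heatK' (s i - prev s i) (y i - prev y i))|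
      ≤ (2 * Real.sqrt Real.pi / Real.sqrt (Real.exp 1)) ^ n / ((n / 2).factorial : ℝ)
          * B ^ n * t ^ ((n : ℝ) / 2) := by
  have hB0 : 0 ≤ B := (abs_nonneg _).trans (hB 0)
  set K : ℝ := B * Real.sqrt (2 / Real.pi) with hK
  have hK0 : 0 ≤ K := by positivity
  -- the spatial integral, for a fixed time vector in the simplex
  have inner : ∀ s ∈ simplex n t,
      ‖∫ y : Fin n → ℝ, (∏ i, b (y i)) * ∏ i, heatK' (s i - prev s i) (y i - prev y i)‖ₑ
        ≤ ENNReal.ofReal (K ^ n) * ((∏ i, ENNReal.ofReal ((s i - prev s i) ^ (-(1 / 2) : ℝ)))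
          * ENNReal.ofReal ((t - lastCoord s) ^ (0 : ℝ))) := by
    intro s hs
    have hle : ∀ y : Fin n → ℝ,
        ‖(∏ i, b (y i)) * ∏ i, heatK' (s i - prev s i) (y i - prev y i)‖ₑ
          ≤ ENNReal.ofReal B ^ n * ∏ i, ‖heatK' (s i - prev s i) (y i - prev y i)‖ₑ := by
      intro y
      rw [enorm_mul]
      simp only [← ofReal_norm, norm_prod]
      rw [ENNReal.ofReal_prod_of_nonneg fun i _ => norm_nonneg _,
        ENNReal.ofReal_prod_of_nonneg fun i _ => norm_nonneg _]
      gcongr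
      calc _ ≤ ∏ _i : Fin n, ENNReal.ofReal B :=
            Finset.prod_le_prod' fun i _ => ENNReal.ofReal_le_ofReal (hB _)
        _ = _ := by simp
    refine (enorm_integral_le_lintegral_enorm _).trans ((lintegral_mono hle).trans ?_)
    rw [lintegral_const_mul' _ _ (ENNReal.pow_ne_top ENNReal.ofReal_ne_top)]
    refine (mul_le_mul_right (lintegral_prod_heatK' n (fun i => s i - prev s i)
      fun i => sub_prev_pos hs i) _).trans (le_of_eq ?_)
    rw [Finset.prod_mul_distrib, Finset.prod_const, Finset.card_univ, Fintype.card_fin,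
      Real.rpow_zero, ENNReal.ofReal_one, mul_one, ENNReal.ofReal_pow hK0, hK,
      ENNReal.ofReal_mul hB0, mul_pow, mul_assoc]
  have hGh : Real.Gamma (1 / 2) = Real.sqrt Real.pi := Real.Gamma_one_half_eq
  have hG : 0 < Real.Gamma ((n : ℝ) / 2 + 1) := Real.Gamma_pos_of_pos (by positivity)
  have main : ENNReal.ofReal |∫ s in simplex n t,
        (∫ y : Fin n → ℝ, (∏ i, b (y i)) * ∏ i, heatK' (s i - prev s i) (y i - prev y i))|
      ≤ ENNReal.ofReal (Real.sqrt 2 ^ n / Real.Gamma (n / 2 + 1) * B ^ n * t ^ ((n : ℝ) / 2)) := by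
    rw [← Real.norm_eq_abs, ofReal_norm]
    refine (enorm_integral_le_lintegral_enorm _).trans
      ((setLIntegral_mono' (measurableSet_simplex n t) inner).trans ?_)
    rw [lintegral_const_mul' _ _ ENNReal.ofReal_ne_top,
      ← lintegral_indicator (measurableSet_simplex n t)]
    refine (mul_le_mul_right (lintegral_dirichlet n ht (a := 0) le_rfl) _).trans (le_of_eq ?_)
    rw [← ENNReal.ofReal_mul (by positivity)]
    congr 1
    have e1 : (0 : ℝ) + 1 + n / 2 = n / 2 + 1 := by ring
    have e2 : (0 : ℝ) + (n : ℝ) / 2 = n / 2 := by ring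
    have e3 : Real.sqrt 2 ^ n = Real.sqrt (2 / Real.pi) ^ n * Real.sqrt Real.pi ^ n := by
      rw [← mul_pow, ← Real.sqrt_mul (by positivity), div_mul_cancel₀ _ Real.pi_ne_zero]
    rw [e1, e2, hGh, zero_add, Real.Gamma_one, hK, mul_pow, e3]
    ring
  refine ((ENNReal.ofReal_le_ofReal_iff (by positivity)).1 main).trans ?_
  have hc := const_le n
  exact mul_le_mul_of_nonneg_right (mul_le_mul_of_nonneg_right hc (by positivity)) (by positivity)
end

section
/- For every t > 0 and every x ∈ ℝ, the derivative of the heat kernel satisfies |q_t'(x)| ≤ (2/√(t·e)) · q_{2t}(x). -/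
theorem hasDerivAt_heatK (t : ℝ) (ht : 0 < t) (x : ℝ) :
    HasDerivAt (fun y => heatK t y) (-(x / t) * heatK t x) x := by
  have h : HasDerivAt (fun y : ℝ => -y ^ 2 / (2 * t)) (-(x / t)) x := by
    refine (((hasDerivAt_pow 2 x).neg).div_const (2 * t)).congr_deriv ?_
    push_cast
    field_simp
  have h2 := h.exp.div_const (Real.sqrt (2 * Real.pi * t))
  unfold heatK
  refine h2.congr_deriv ?_
  ring

/-- The sharp pointwise bound, with equality at `x² = 2t`. -/
theorem abs_le_sqrt_mul_exp (t : ℝ) (ht : 0 < t) (x : ℝ) :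
    |x| ≤ Real.sqrt 2 * Real.sqrt t * Real.exp (x ^ 2 / (4 * t) - 1 / 2) := by
  apply abs_le_of_sq_le_sq _ (by positivity)
  have h := Real.add_one_le_exp (x ^ 2 / (2 * t) - 1)
  have he : Real.exp (x ^ 2 / (4 * t) - 1 / 2) ^ 2 = Real.exp (x ^ 2 / (2 * t) - 1) := by
    rw [← Real.exp_nat_mul]
    congr 1
    push_cast
    field_simp
    ring
  rw [mul_pow, mul_pow, he, Real.sq_sqrt (by norm_num), Real.sq_sqrt ht.le]
  calc x ^ 2 = 2 * t * (x ^ 2 / (2 * t) - 1 + 1) := by field_simp; ring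
    _ ≤ _ := by gcongr

/-- for every `t > 0` and `x ∈ ℝ`, `|q_t'(x)| ≤ (2/√(t·e)) · q_{2t}(x)`. -/
theorem abs_deriv_heatK_le (t : ℝ) (ht : 0 < t) (x : ℝ) :
    |deriv (fun y => heatK t y) x| ≤ 2 / Real.sqrt (t * Real.exp 1) * heatK (2 * t) x := by
  rw [(hasDerivAt_heatK t ht x).deriv]
  have hx := abs_le_sqrt_mul_exp t ht x
  have hs : Real.sqrt (2 * Real.pi * (2 * t)) = Real.sqrt 2 * Real.sqrt (2 * Real.pi * t) := by
    rw [← Real.sqrt_mul (by norm_num)]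
    congr 1
    ring
  have hte : Real.sqrt (t * Real.exp 1) = Real.sqrt t * Real.exp (1 / 2) := by
    rw [Real.sqrt_mul ht.le, ← Real.exp_half]
  have hE : Real.exp (-x ^ 2 / (2 * t)) =
      Real.exp (-x ^ 2 / (2 * (2 * t))) * Real.exp (-x ^ 2 / (2 * (2 * t))) := by
    rw [← Real.exp_add]
    congr 1
    field_simp
    ring
  have hE2 : Real.exp (x ^ 2 / (4 * t) - 1 / 2) =
      (Real.exp (-x ^ 2 / (2 * (2 * t))))⁻¹ * (Real.exp (1 / 2))⁻¹ := by
    rw [← Real.exp_neg, ← Real.exp_neg, ← Real.exp_add]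
    congr 1
    field_simp
    ring
  rw [hE2] at hx
  unfold heatK
  rw [hs, hte, hE, abs_mul, abs_neg, abs_div, abs_of_pos ht]
  have hS : 0 < Real.sqrt (2 * Real.pi * t) := by positivity
  have ht2 : t = Real.sqrt t * Real.sqrt t := (Real.mul_self_sqrt ht.le).symm
  have hr : 0 < Real.sqrt t := Real.sqrt_pos.2 ht
  have h2 : (2 : ℝ) = Real.sqrt 2 * Real.sqrt 2 := (Real.mul_self_sqrt (by norm_num)).symm
  -- With every root and exponential a positive variable, what remains is algebra in
  -- `E = exp (-x²/(4t))`, `c = exp (1/2)`, `q = √2`, `r = √t` and `S = √(2πt)`.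
  generalize Real.sqrt (2 * Real.pi * t) = S at *
  have hEpos := Real.exp_pos (-x ^ 2 / (2 * (2 * t)))
  generalize Real.exp (-x ^ 2 / (2 * (2 * t))) = E at *
  have hcpos := Real.exp_pos (1 / 2)
  generalize Real.exp (1 / 2) = c at *
  have hq : 0 < Real.sqrt 2 := by positivity
  generalize Real.sqrt 2 = q at *
  generalize Real.sqrt t = r at *
  rw [abs_of_nonneg (by positivity : 0 ≤ E * E / S)]
  calc |x| / t * (E * E / S) ≤ (q * r * (E⁻¹ * c⁻¹)) / t * (E * E / S) := by gcongr
    _ = 2 / (r * c) * (E / (q * S)) := by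
      rw [ht2, h2]
      field_simp
end

section
/- Let b : ℝ → ℝ be a continuously differentiable function with b and its derivative b' bounded, and let t > 0. Define I₂(t) = ∫_0^t ∫_{s₁}^t ∫_{ℝ²} b'(y₁) b'(y₂) · q_{s₁}(y₁) q_{s₂−s₁}(y₂−y₁) dy₁ dy₂ ds₂ ds₁. Then |I₂(t)| ≤ 8 ‖b‖_∞² t. -/
/-!
The bound is an analytic form of the Itô–Tanaka trick. Let `F` be a primitive of `b`. Since
`∂_r P_r F = ½ P_r b'` for the heat semigroup `P_r`, the derivative of the second factor can be
integrated out in time: for fixed `s₁ = s`,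
`∫_s^t P_{s₂-s} b'(y) ds₂ = 2 (P_{t-s} F - F)(y) = 2 ∫ (F(y + √(t-s) z) - F(y)) q_1(z) dz`.
This identity is obtained from the substitution `s₂ = s + u²`, a Gaussian integration by parts
(`mul_integral_deriv_mul_heatK`) and Fubini's theorem (`fubini_heatK`).

For each `z`, the remaining integral `∫ b'(y) q_s(y) (F(y + √(t-s) z) - F(y)) dy` is integrated by
parts (`abs_integral_deriv_mul_heatK_mul_le`). The increment of `F` is at most `B √(t-s) |z|`, its
derivative is at most `2B`, and `∫ |q_s'| ≤ 1/√s`, so the integral is at most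
`B² |z| √(t-s) / √s + 2 B²`. Averaging in `z` with `∫ |z| q_1(z) dz ≤ 1` bounds the integrand in `s`
by `2 B² √t / √s + 4 B²`, whose integral over `(0, t)` is exactly `8 B² t`.
-/

open MeasureTheory intervalIntegral

/-! ### Moments and derivative of the heat kernel -/

lemma heatK_cont (s : ℝ) : Continuous (heatK s) := by
  unfold heatK; fun_prop

lemma heatK_nonneg (s y : ℝ) : 0 ≤ heatK s y := by unfold heatK; positivity

lemma heatK_eq (s y : ℝ) :
    heatK s y = (Real.sqrt (2 * Real.pi * s))⁻¹ * Real.exp (-(1 / (2 * s)) * y ^ 2) := by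
  unfold heatK
  rw [div_eq_inv_mul]; congr 2; ring

lemma heatK_integrable {s : ℝ} (hs : 0 < s) : Integrable (heatK s) := by
  simp_rw [funext (heatK_eq s)]
  exact (integrable_exp_neg_mul_sq (by positivity)).const_mul _

lemma heatK_integral {s : ℝ} (hs : 0 < s) : ∫ y, heatK s y = 1 := by
  simp_rw [heatK_eq]
  rw [MeasureTheory.integral_const_mul, integral_gaussian, show Real.pi / (1 / (2 * s)) = 2 * Real.pi * s by
    field_simp]
  exact inv_mul_cancel₀ (by positivity)

lemma heatK_hasDerivAt (s y : ℝ) : HasDerivAt (heatK s) (-(y / s) * heatK s y) y := by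
  have h := ((((hasDerivAt_pow 2 y).const_mul (-(1 / (2 * s)))).exp).const_mul
    (Real.sqrt (2 * Real.pi * s))⁻¹)
  rw [← funext (heatK_eq s)] at h
  refine h.congr_deriv ?_
  rw [heatK_eq]
  push_cast
  ring

lemma mul_heatK_integrable {s : ℝ} (hs : 0 < s) : Integrable (fun y => y * heatK s y) := by
  have := (integrable_mul_exp_neg_mul_sq (b := 1 / (2 * s)) (by positivity)).const_mul
    (Real.sqrt (2 * Real.pi * s))⁻¹
  refine this.congr (.of_forall fun y => ?_)
  simp only [heatK_eq]; ring

lemma sq_mul_heatK_integrable {s : ℝ} (hs : 0 < s) :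
    Integrable (fun y => y ^ 2 * heatK s y) := by
  have := (integrable_rpow_mul_exp_neg_mul_sq (b := 1 / (2 * s)) (by positivity)
    (s := 2) (by norm_num)).const_mul (Real.sqrt (2 * Real.pi * s))⁻¹
  refine this.congr (.of_forall fun y => ?_)
  simp only [heatK_eq, Real.rpow_two]; ring

lemma abs_mul_heatK_integrable {s : ℝ} (hs : 0 < s) : Integrable (fun y => |y| * heatK s y) := by
  refine (mul_heatK_integrable hs).abs.congr (.of_forall fun y => ?_)
  simp only [abs_mul, abs_of_nonneg (heatK_nonneg s y)]

/-- The second moment, from `y q_s(y) = -s q_s'(y)` and an integration by parts. -/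
lemma integral_sq_mul_heatK {s : ℝ} (hs : 0 < s) : ∫ y, y ^ 2 * heatK s y = s := by
  have h := integral_mul_deriv_eq_deriv_mul_of_integrable (u := fun y : ℝ => y)
    (u' := fun _ => 1) (v := heatK s) (v' := fun y => -(y / s) * heatK s y)
    (fun y _ => hasDerivAt_id y) (fun y _ => heatK_hasDerivAt s y) ?_ ?_ (mul_heatK_integrable hs)
  · simp only [one_mul, heatK_integral hs] at h
    have e : ∀ y : ℝ, y * (-(y / s) * heatK s y) = -(1 / s) * (y ^ 2 * heatK s y) := by
      intro y; ring
    simp_rw [e, MeasureTheory.integral_const_mul] at h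
    field_simp at h
    linarith
  · refine ((sq_mul_heatK_integrable hs).const_mul (-(1 / s))).congr (.of_forall fun y => ?_)
    simp only [Pi.mul_apply]; ring
  · refine (heatK_integrable hs).congr (.of_forall fun y => ?_)
    simp

/-- First absolute moment: `|y| ≤ y² / (2√s) + √s / 2` reduces it to the second moment. -/
lemma integral_abs_mul_heatK_le {s : ℝ} (hs : 0 < s) : ∫ y, |y| * heatK s y ≤ √s := by
  have h0 : 0 < √s := Real.sqrt_pos.2 hs
  have hss : √s * √s = s := Real.mul_self_sqrt hs.le
  calc ∫ y, |y| * heatK s y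
      ≤ ∫ y, ((1 / (2 * √s)) * (y ^ 2 * heatK s y) + (√s / 2) * heatK s y) := by
        refine integral_mono (abs_mul_heatK_integrable hs)
          (((sq_mul_heatK_integrable hs).const_mul _).add ((heatK_integrable hs).const_mul _)) ?_
        intro y
        have : |y| ≤ (1 / (2 * √s)) * y ^ 2 + √s / 2 := by
          rw [← sq_abs y]
          have : (1 / (2 * √s)) * |y| ^ 2 + √s / 2 - |y| = (1 / (2 * √s)) * (|y| - √s) ^ 2 := by
            field_simp; ring
          have : 0 ≤ (1 / (2 * √s)) * (|y| - √s) ^ 2 := by positivity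
          linarith
        have := mul_le_mul_of_nonneg_right this (heatK_nonneg s y)
        simp only
        linarith
    _ = √s := by
        rw [integral_add ((sq_mul_heatK_integrable hs).const_mul _)
          ((heatK_integrable hs).const_mul _), MeasureTheory.integral_const_mul, MeasureTheory.integral_const_mul,
          integral_sq_mul_heatK hs, heatK_integral hs]
        field_simp
        nlinarith

/-! ### Gaussian integrations by parts -/

/-- Brownian scaling of the heat kernel. -/
lemma heatK_sq_mul {u : ℝ} (hu : 0 < u) (z : ℝ) : u * heatK (u ^ 2) (u * z) = heatK 1 z := by
  unfold heatK
  rw [show 2 * Real.pi * u ^ 2 = (2 * Real.pi * 1) * u ^ 2 by ring,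
    Real.sqrt_mul (by positivity), Real.sqrt_sq hu.le]
  have : -(u * z) ^ 2 / (2 * u ^ 2) = -z ^ 2 / (2 * 1) := by field_simp
  rw [this]
  field_simp

/-- Integrability by domination with a multiple of `(1 + |y|) q_s(y)`. -/
lemma integrable_of_le_mul_heatK {f : ℝ → ℝ} (hf : Continuous f) {s : ℝ} (hs : 0 < s) (K L : ℝ)
    (h : ∀ y, |f y| ≤ K * heatK s y + L * (|y| * heatK s y)) : Integrable f := by
  refine Integrable.mono' (((heatK_integrable hs).const_mul K).add
    ((abs_mul_heatK_integrable hs).const_mul L)) hf.aestronglyMeasurable (.of_forall fun y => ?_)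
  simpa using h y

/-- The derivative is removed from `b'` by substituting `x = y + u z` and integrating by parts
against the standard Gaussian density. -/
lemma mul_integral_deriv_mul_heatK {b d : ℝ → ℝ} (hd : ∀ x, HasDerivAt b (d x) x)
    (hdc : Continuous d) {B C : ℝ} (hB : ∀ x, |b x| ≤ B) (hC : ∀ x, |d x| ≤ C)
    {u : ℝ} (hu : 0 < u) (y : ℝ) :
    u * ∫ x, d x * heatK (u ^ 2) (x - y) = ∫ z, z * b (y + u * z) * heatK 1 z := by
  have hbc : Continuous b := continuous_iff_continuousAt.2 fun x => (hd x).continuousAt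
  have hk := heatK_cont 1
  rw [← integral_add_left_eq_self _ y]
  have h1 := Measure.integral_comp_mul_left
    (fun x => d (y + x) * heatK (u ^ 2) (y + x - y)) u
  rw [abs_of_pos (inv_pos.2 hu), smul_eq_mul, eq_inv_mul_iff_mul_eq₀ hu.ne'] at h1
  rw [← h1, ← MeasureTheory.integral_const_mul, ← MeasureTheory.integral_const_mul]
  have h2 := integral_mul_deriv_eq_deriv_mul_of_integrable (u := heatK 1)
    (u' := fun z => -(z / 1) * heatK 1 z) (v := fun z => b (y + u * z))
    (v' := fun z => d (y + u * z) * u) (fun z _ => heatK_hasDerivAt 1 z)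
    (fun z _ => (hd (y + u * z)).comp z
      (by simpa using ((hasDerivAt_id z).const_mul u).const_add y)) ?_ ?_ ?_
  · calc _ = ∫ z, heatK 1 z * (d (y + u * z) * u) := by
          congr 1; ext z
          rw [← heatK_sq_mul hu z, add_sub_cancel_left]; ring
      _ = _ := by
          rw [h2, ← MeasureTheory.integral_neg]
          congr 1; ext z; ring
  · refine integrable_of_le_mul_heatK (by fun_prop) one_pos (C * u) 0 fun z => ?_
    simp only [Pi.mul_apply, abs_mul, abs_of_pos hu, abs_of_nonneg (heatK_nonneg 1 z)]
    have := mul_le_mul_of_nonneg_right (hC (y + u * z)) (mul_nonneg hu.le (heatK_nonneg 1 z))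
    linarith
  · refine integrable_of_le_mul_heatK (by fun_prop) one_pos 0 B fun z => ?_
    simp only [Pi.mul_apply, abs_mul, abs_neg, div_one, abs_of_nonneg (heatK_nonneg 1 z)]
    have := mul_le_mul_of_nonneg_right (hB (y + u * z))
      (mul_nonneg (abs_nonneg z) (heatK_nonneg 1 z))
    linarith
  · refine integrable_of_le_mul_heatK (by fun_prop) one_pos B 0 fun z => ?_
    simp only [Pi.mul_apply, abs_mul, abs_of_nonneg (heatK_nonneg 1 z)]
    have := mul_le_mul_of_nonneg_right (hB (y + u * z)) (heatK_nonneg 1 z)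
    linarith

/-- Integration by parts in `y`, moving the derivative from `b` onto `q_s h`; here
`|q_s'(y)| = |y| q_s(y) / s` has integral at most `1 / √s`. -/
lemma abs_integral_deriv_mul_heatK_mul_le {b d h h' : ℝ → ℝ} (hd : ∀ x, HasDerivAt b (d x) x)
    (hdc : Continuous d) {B C : ℝ} (hB : ∀ x, |b x| ≤ B) (hC : ∀ x, |d x| ≤ C)
    (hh : ∀ x, HasDerivAt h (h' x) x) (hhc : Continuous h') {M N : ℝ}
    (hM : ∀ x, |h x| ≤ M) (hN : ∀ x, |h' x| ≤ N) {s : ℝ} (hs : 0 < s) :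
    |∫ y, d y * (heatK s y * h y)| ≤ B * M / √s + B * N := by
  have hbc : Continuous b := continuous_iff_continuousAt.2 fun x => (hd x).continuousAt
  have hhc' : Continuous h := continuous_iff_continuousAt.2 fun x => (hh x).continuousAt
  have hk := heatK_cont s
  have hB0 : 0 ≤ B := (abs_nonneg _).trans (hB 0)
  have hC0 : 0 ≤ C := (abs_nonneg _).trans (hC 0)
  have hM0 : 0 ≤ M := (abs_nonneg _).trans (hM 0)
  have hbound : ∀ y, |(-(y / s) * heatK s y * h y + heatK s y * h' y) * b y| ≤
      B * N * heatK s y + B * M / s * (|y| * heatK s y) := by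
    intro y
    have e1 : |-(y / s) * heatK s y * h y| ≤ |y| / s * heatK s y * M := by
      rw [abs_mul, abs_mul, abs_neg, abs_div, abs_of_pos hs, abs_of_nonneg (heatK_nonneg s y)]
      have := heatK_nonneg s y
      gcongr
      exact hM y
    have e2 : |heatK s y * h' y| ≤ heatK s y * N := by
      rw [abs_mul, abs_of_nonneg (heatK_nonneg s y)]
      exact mul_le_mul_of_nonneg_left (hN y) (heatK_nonneg s y)
    rw [abs_mul]
    calc _ ≤ (|y| / s * heatK s y * M + heatK s y * N) * B :=
          mul_le_mul ((abs_add_le _ _).trans (add_le_add e1 e2)) (hB y) (abs_nonneg _)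
            ((abs_nonneg _).trans ((abs_add_le _ _).trans (add_le_add e1 e2)))
      _ = _ := by ring
  have h2 := integral_mul_deriv_eq_deriv_mul_of_integrable (u := fun y => heatK s y * h y)
    (u' := fun y => -(y / s) * heatK s y * h y + heatK s y * h' y) (v := b)
    (v' := d) (fun y _ => (heatK_hasDerivAt s y).mul (hh y)) (fun y _ => hd y) ?_ ?_ ?_
  · simp_rw [mul_comm (d _)]
    rw [h2, abs_neg, ← Real.norm_eq_abs]
    refine (MeasureTheory.norm_integral_le_of_norm_le
      (((heatK_integrable hs).const_mul (B * N)).add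
        ((abs_mul_heatK_integrable hs).const_mul (B * M / s))) (.of_forall hbound)).trans ?_
    simp only [Pi.add_apply]
    rw [integral_add ((heatK_integrable hs).const_mul _)
      ((abs_mul_heatK_integrable hs).const_mul _), MeasureTheory.integral_const_mul,
      MeasureTheory.integral_const_mul, heatK_integral hs]
    have h3 := mul_le_mul_of_nonneg_left (integral_abs_mul_heatK_le hs)
      (show 0 ≤ B * M / s by positivity)
    have h4 : B * M / s * √s = B * M / √s := by
      rw [div_mul_eq_mul_div, mul_div_assoc, Real.sqrt_div_self, ← div_eq_mul_inv]
    linarith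
  · refine integrable_of_le_mul_heatK (by fun_prop) hs (M * C) 0 fun y => ?_
    simp only [Pi.mul_apply, abs_mul, abs_of_nonneg (heatK_nonneg s y)]
    have := mul_le_mul_of_nonneg_left (mul_le_mul (hM y) (hC y) (abs_nonneg _) hM0)
      (heatK_nonneg s y)
    linarith
  · exact integrable_of_le_mul_heatK (by fun_prop) hs _ _ hbound
  · refine integrable_of_le_mul_heatK (by fun_prop) hs (M * B) 0 fun y => ?_
    simp only [Pi.mul_apply, abs_mul, abs_of_nonneg (heatK_nonneg s y)]
    have := mul_le_mul_of_nonneg_left (mul_le_mul (hM y) (hB y) (abs_nonneg _) hM0)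
      (heatK_nonneg s y)
    linarith

/-! ### Increments of a primitive -/

/-- The increment `F(y + w z) - F(y)` of a primitive `F` of `b`, written as the integral of
`d/du F(y + u z)`, the form in which it arises from Fubini's theorem. -/
noncomputable def incr (b : ℝ → ℝ) (w z y : ℝ) : ℝ := ∫ u in (0 : ℝ)..w, z * b (y + u * z)

lemma incr_eq {b : ℝ → ℝ} (hb : Continuous b) (w z y : ℝ) :
    incr b w z y = (∫ x in (0 : ℝ)..(y + w * z), b x) - ∫ x in (0 : ℝ)..y, b x := by
  have hF : ∀ x, HasDerivAt (fun x => ∫ v in (0 : ℝ)..x, b v) (b x) x := fun x =>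
    intervalIntegral.integral_hasDerivAt_right (hb.intervalIntegrable _ _)
      (hb.stronglyMeasurableAtFilter _ _) hb.continuousAt
  unfold incr
  rw [intervalIntegral.integral_eq_sub_of_hasDerivAt
    (f := fun u => ∫ v in (0 : ℝ)..(y + u * z), b v)]
  · simp
  · intro u _
    have h : HasDerivAt (fun u => y + u * z) z u := by
      simpa using ((hasDerivAt_id u).mul_const z).const_add y
    exact ((hF (y + u * z)).comp u h).congr_deriv (mul_comm _ _)
  · exact Continuous.intervalIntegrable (by fun_prop) _ _

lemma hasDerivAt_incr {b : ℝ → ℝ} (hb : Continuous b) (w z y : ℝ) :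
    HasDerivAt (incr b w z) (b (y + w * z) - b y) y := by
  have hF : ∀ x, HasDerivAt (fun x => ∫ v in (0 : ℝ)..x, b v) (b x) x := fun x =>
    intervalIntegral.integral_hasDerivAt_right (hb.intervalIntegrable _ _)
      (hb.stronglyMeasurableAtFilter _ _) hb.continuousAt
  rw [funext (incr_eq hb w z)]
  exact ((hF (y + w * z)).comp_add_const y (w * z)).sub (hF y)

lemma abs_incr_le {b : ℝ → ℝ} {B : ℝ} (hB : ∀ x, |b x| ≤ B) {w : ℝ} (hw : 0 ≤ w) (z y : ℝ) :
    |incr b w z y| ≤ B * |z| * w := by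
  have := intervalIntegral.norm_integral_le_of_norm_le_const (a := 0) (b := w)
    (f := fun u => z * b (y + u * z)) (C := B * |z|) fun u _ => by
      rw [norm_mul, mul_comm]
      exact mul_le_mul_of_nonneg_right (hB _) (norm_nonneg _)
  simpa [abs_of_nonneg hw, incr] using this

/-! ### The estimate -/

/-- Exchanging the order of integration lets the `u`-integral collapse to `incr`. The integrand is
dominated by `C q_s(y) · B |z| q_1(z)`. -/
lemma fubini_heatK {b d : ℝ → ℝ} (hbc : Continuous b) (hdc : Continuous d) {B C : ℝ}
    (hB : ∀ x, |b x| ≤ B) (hC : ∀ x, |d x| ≤ C) {s w : ℝ} (hs : 0 < s) (hw : 0 ≤ w) :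
    ∫ u in Set.Ioo 0 w, ∫ y, d y * heatK s y * ∫ z, z * b (y + u * z) * heatK 1 z =
      ∫ z, heatK 1 z * ∫ y, d y * (heatK s y * incr b w z y) := by
  have hk := heatK_cont s
  have hk1 := heatK_cont 1
  have hB0 : 0 ≤ B := (abs_nonneg _).trans (hB 0)
  have hC0 : 0 ≤ C := (abs_nonneg _).trans (hC 0)
  rw [← integral_Ioc_eq_integral_Ioo]
  let K : ℝ → ℝ × ℝ → ℝ := fun u p =>
    d p.1 * heatK s p.1 * (p.2 * b (p.1 + u * p.2) * heatK 1 p.2)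
  have hKc : ∀ u, Continuous (K u) := fun u => by fun_prop
  have hG : Integrable (fun p : ℝ × ℝ => (C * heatK s p.1) * (B * (|p.2| * heatK 1 p.2)))
      (volume.prod volume) :=
    ((heatK_integrable hs).const_mul C).mul_prod ((abs_mul_heatK_integrable one_pos).const_mul B)
  have hKle : ∀ u p, ‖K u p‖ ≤ (C * heatK s p.1) * (B * (|p.2| * heatK 1 p.2)) := by
    intro u p
    have h1 := heatK_nonneg s p.1
    have h2 := heatK_nonneg 1 p.2
    simp only [K, Real.norm_eq_abs, abs_mul, abs_of_nonneg h1, abs_of_nonneg h2]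
    rw [mul_comm |p.2| |b _|, mul_assoc |b _|]
    gcongr
    · exact hC _
    · exact hB _
  have hKu : ∀ u, Integrable (K u) (volume.prod volume) := fun u =>
    hG.mono' (hKc u).aestronglyMeasurable (.of_forall (hKle u))
  have hKK : Integrable (Function.uncurry K)
      ((volume.restrict (Set.Ioc 0 w)).prod (volume.prod volume)) := by
    have h1 : Integrable (fun _ : ℝ => (1 : ℝ)) (volume.restrict (Set.Ioc 0 w)) :=
      integrable_const _
    refine (h1.mul_prod hG).mono' ?_ (.of_forall fun q => ?_)
    · refine Continuous.aestronglyMeasurable ?_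
      simp only [K, Function.uncurry_def]
      fun_prop
    · simpa [Function.uncurry_def] using hKle q.1 q.2
  calc _ = ∫ u in Set.Ioc 0 w, ∫ p, K u p ∂(volume.prod volume) := by
        congr 1; ext u
        rw [integral_prod _ (hKu u)]
        congr 1; ext y
        rw [← MeasureTheory.integral_const_mul]
    _ = ∫ p, (∫ u in Set.Ioc 0 w, K u p) ∂(volume.prod volume) := integral_integral_swap hKK
    _ = ∫ z, ∫ y, ∫ u in Set.Ioc 0 w, K u (y, z) :=
        integral_prod_symm _ hKK.integral_prod_right
    _ = _ := by
        congr 1; ext z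
        rw [← MeasureTheory.integral_const_mul]
        congr 1; ext y
        rw [incr, intervalIntegral.integral_of_le hw]
        simp only [← MeasureTheory.integral_const_mul, K]
        congr 1; ext u; ring

/-- The bound on the integrand of the outer integral, for a fixed first time `s`. -/
lemma abs_inner_le {b d : ℝ → ℝ} (hd : ∀ x, HasDerivAt b (d x) x)
    (hdc : Continuous d) {B C : ℝ} (hB : ∀ x, |b x| ≤ B) (hC : ∀ x, |d x| ≤ C)
    {s t : ℝ} (hs : 0 < s) (hst : s ≤ t) :
    |∫ s₂ in s..t, ∫ y₁ : ℝ, ∫ y₂ : ℝ,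
        d y₁ * d y₂ * heatK s y₁ * heatK (s₂ - s) (y₂ - y₁)|
      ≤ 2 * (B ^ 2 * √(t - s) / √s + 2 * B ^ 2) := by
  have hbc : Continuous b := continuous_iff_continuousAt.2 fun x => (hd x).continuousAt
  have hB0 : 0 ≤ B := (abs_nonneg _).trans (hB 0)
  set w := √(t - s) with hw
  have hw0 : 0 ≤ w := Real.sqrt_nonneg _
  have hww : w ^ 2 = t - s := Real.sq_sqrt (by linarith)
  have himg : (fun u : ℝ => s + u ^ 2) '' Set.Ioo 0 w = Set.Ioo s t := by
    ext x
    constructor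
    · rintro ⟨u, ⟨h0, h1⟩, rfl⟩
      exact ⟨by simp only; nlinarith, by simp only; nlinarith⟩
    · rintro ⟨h0, h1⟩
      refine ⟨√(x - s), ⟨Real.sqrt_pos.2 (by linarith),
        Real.sqrt_lt_sqrt (by linarith) (by linarith)⟩, ?_⟩
      simp only
      rw [Real.sq_sqrt (by linarith)]; ring
  -- The substitution `s₂ = s + u²` makes the second kernel `q_{u²}`; its Jacobian `2u` supplies
  -- the factor `u` of `mul_integral_deriv_mul_heatK`.
  have key : ∫ s₂ in s..t, ∫ y₁ : ℝ, ∫ y₂ : ℝ,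
        d y₁ * d y₂ * heatK s y₁ * heatK (s₂ - s) (y₂ - y₁) =
      2 * ∫ z, heatK 1 z * ∫ y, d y * (heatK s y * incr b w z y) := by
    rw [intervalIntegral.integral_of_le hst, integral_Ioc_eq_integral_Ioo, ← himg,
      integral_image_eq_integral_abs_deriv_smul (f' := fun u => 2 * u) measurableSet_Ioo
        (fun u _ => by simpa using ((hasDerivAt_pow 2 u).const_add s).hasDerivWithinAt)
        (fun u hu v hv h => by
          have : u ^ 2 = v ^ 2 := by simpa using h
          exact (pow_left_inj₀ hu.1.le hv.1.le two_ne_zero).1 this),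
      ← fubini_heatK hbc hdc hB hC hs hw0, ← MeasureTheory.integral_const_mul]
    refine setIntegral_congr_fun measurableSet_Ioo fun u hu => ?_
    simp only [smul_eq_mul]
    rw [abs_of_pos (by linarith [hu.1] : 0 < 2 * u), mul_assoc, ← MeasureTheory.integral_const_mul]
    congr 2; ext y
    rw [← mul_integral_deriv_mul_heatK hd hdc hB hC hu.1 y, add_sub_cancel_left,
      ← MeasureTheory.integral_const_mul, ← MeasureTheory.integral_const_mul,
      ← MeasureTheory.integral_const_mul]
    congr 1; ext x; ring
  rw [key, abs_mul, abs_two]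
  refine mul_le_mul_of_nonneg_left ?_ two_pos.le
  -- `|incr| ≤ B |z| w`, and its derivative `b(y + w z) - b(y)` is at most `2B`.
  have hz : ∀ z, ‖heatK 1 z * ∫ y, d y * (heatK s y * incr b w z y)‖ ≤
      (B ^ 2 * w / √s) * (|z| * heatK 1 z) + 2 * B ^ 2 * heatK 1 z := by
    intro z
    have h := abs_integral_deriv_mul_heatK_mul_le (h := incr b w z)
      (h' := fun y => b (y + w * z) - b y) (M := B * |z| * w) (N := 2 * B)
      hd hdc hB hC (hasDerivAt_incr hbc w z) (by fun_prop) (abs_incr_le hB hw0 z)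
      (fun y => (abs_sub _ _).trans (by linarith [hB (y + w * z), hB y])) hs
    rw [norm_mul, Real.norm_eq_abs, Real.norm_eq_abs, abs_of_nonneg (heatK_nonneg 1 z)]
    refine (mul_le_mul_of_nonneg_left h (heatK_nonneg 1 z)).trans (le_of_eq ?_)
    ring
  rw [← Real.norm_eq_abs]
  refine (MeasureTheory.norm_integral_le_of_norm_le
    (((abs_mul_heatK_integrable one_pos).const_mul _).add
      ((heatK_integrable one_pos).const_mul _)) (.of_forall hz)).trans ?_
  simp only [Pi.add_apply]
  rw [integral_add ((abs_mul_heatK_integrable one_pos).const_mul _)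
      ((heatK_integrable one_pos).const_mul _), MeasureTheory.integral_const_mul,
      MeasureTheory.integral_const_mul, heatK_integral one_pos]
  have h1 := integral_abs_mul_heatK_le one_pos
  rw [Real.sqrt_one] at h1
  have := mul_le_mul_of_nonneg_left h1 (show 0 ≤ B ^ 2 * w / √s by positivity)
  linarith

/-- let `b : ℝ → ℝ` be `C¹` with `b` bounded (by `B`) and `b'` bounded, and `t > 0`.
With `I₂(t) = ∫_0^t ∫_{s₁}^t ∫_{ℝ²} b'(y₁) b'(y₂) q_{s₁}(y₁) q_{s₂−s₁}(y₂−y₁) dy₁ dy₂ ds₂ ds₁`,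
we have `|I₂(t)| ≤ 8 ‖b‖_∞² t`. -/
theorem abs_I_two_le (b : ℝ → ℝ) (hb : ContDiff ℝ 1 b)
    (B : ℝ) (hB : ∀ x, |b x| ≤ B) (C : ℝ) (hC : ∀ x, |deriv b x| ≤ C)
    (t : ℝ) (ht : 0 < t) :
    |∫ s₁ in (0 : ℝ)..t, ∫ s₂ in s₁..t,
        ∫ y₁ : ℝ, ∫ y₂ : ℝ,
          deriv b y₁ * deriv b y₂ * heatK s₁ y₁ * heatK (s₂ - s₁) (y₂ - y₁)|
      ≤ 8 * B ^ 2 * t := by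
  have hd : ∀ x, HasDerivAt b (deriv b x) x := fun x =>
    (hb.differentiable one_ne_zero x).hasDerivAt
  have hdc : Continuous (deriv b) := hb.continuous_deriv le_rfl
  -- It suffices to dominate the outer integrand by `2B² √t / √s + 4B²`, whose integral is `8B² t`.
  have hi : IntervalIntegrable (fun s : ℝ => s ^ (-(1 / 2) : ℝ)) volume 0 t :=
    intervalIntegral.intervalIntegrable_rpow' (by norm_num)
  have hg : IntervalIntegrable
      (fun s : ℝ => 2 * B ^ 2 * √t * s ^ (-(1 / 2) : ℝ) + 4 * B ^ 2) volume 0 t :=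
    (hi.const_mul _).add intervalIntegrable_const
  rw [← Real.norm_eq_abs]
  refine (intervalIntegral.norm_integral_le_of_norm_le ht.le
    (.of_forall fun s hs => ?_) hg).trans (le_of_eq ?_)
  · refine (abs_inner_le hd hdc hB hC hs.1 hs.2).trans ?_
    rw [Real.rpow_neg hs.1.le, ← Real.sqrt_eq_rpow, ← div_eq_mul_inv]
    have h1 : B ^ 2 * √(t - s) / √s ≤ B ^ 2 * √t / √s := by
      gcongr
      linarith [hs.1]
    calc _ ≤ 2 * (B ^ 2 * √t / √s + 2 * B ^ 2) := by linarith
      _ = _ := by ring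
  · rw [intervalIntegral.integral_add (hi.const_mul _) intervalIntegrable_const,
      intervalIntegral.integral_const_mul, integral_rpow (by norm_num),
      intervalIntegral.integral_const]
    rw [show (-(1 / 2) + 1 : ℝ) = 1 / 2 by norm_num, ← Real.sqrt_eq_rpow, ← Real.sqrt_eq_rpow,
      Real.sqrt_zero, smul_eq_mul]
    have := Real.mul_self_sqrt ht.le
    linear_combination 4 * B ^ 2 * this
end

section
/- Let b : ℝ → ℝ be a bounded continuous function and t > 0. Define J₆ = ∫_0^t ∫_{s₁}^t ∫_{s₂}^t ∫_{s₃}^t ∫_{ℝ⁴} b(y₁) b(y₂) b(y₃) b(y₄) · q_{s₁}(y₁) q_{s₂−s₁}''(y₂−y₁) q_{s₃−s₂}'(y₃−y₂) q_{s₄−s₃}'(y₄−y₃) dy₁ dy₂ dy₃ dy₄ ds₄ ds₃ ds₂ ds₁. Then |J₆| ≤ 2³ ‖b‖_∞⁴ · [ ∫_0^t ∫_{s₁}^t (s₂−s₁)^{−1/2} ∫_{s₂}^t (s₃−s₂)^{−1/2} ds₃ ds₂ ds₁ + ∫_0^t ∫_{s₁}^t ∫_{s₂}^t ((s₃−s₂)(t−s₃))^{−1/2}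 ds₃ ds₂ ds₁ ]. -/
/-!
The only non-integrable singularity in `J₆` is that of `q''_{s₂-s₁}`, whose `L¹` norm is of order
`(s₂-s₁)⁻¹`; it is removed by the heat equation `q'' = 2 ∂ₛ q`. In the increments `σ = s₂ - s₁`,
`r = s₃ - s₂`, `u = s₄ - s₃` the inner three time integrals run over the simplex
`σ + r + u ≤ T := t - s₁`, and for fixed `s₁` the spatial integral is a function of
`(σ, r, u)` alone. Hence, away from `σ = 0`, Fubini allows the `σ`-integral to be done first, for fixed `r, u`, and
`∫_ε^β q_σ'' dσ = 2 (q_β - q_ε)` has `L¹` norm at most `4`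
(`abs_integral_heatK''_time_le`). The two factors `q'` contribute `r^{-1/2}` and `u^{-1/2}`
(`integral_abs_heatK'_le`), so that the truncated inner integral is at most
`4 B⁴ ∫₀ᵀ∫₀ᵀ (r u)^{-1/2} du dr = 16 B⁴ T`, uniformly in `ε` (`abs_time_integral_le`,
`abs_truncated_le`), and `ε → 0` gives the same bound for the full one (`abs_inner_le`).
Integrating over `s₁` yields `|J₆| ≤ 8 B⁴ t²`.

On the right-hand side the first of the two integrals is nonnegative and the second equals
`π t² / 2` by the arcsine integral (`integral_arcsine`), so the right-hand side is at least
`4 π B⁴ t²`, hence at least `8 B⁴ t²`.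
-/

open MeasureTheory intervalIntegral

/-- `q_t''(x)`, the second spatial derivative of the heat kernel. -/
noncomputable def heatK'' (t x : ℝ) : ℝ := deriv (deriv (fun y => heatK t y)) x

/-! ### The heat kernel and its derivatives -/

theorem heatK'_eq (t x : ℝ) : heatK' t x = -(x / t) * heatK t x := by
  have : HasDerivAt (fun y => heatK t y) (-(x / t) * heatK t x) x := by
    unfold heatK
    have h1 : HasDerivAt (fun y : ℝ => -y ^ 2 / (2 * t)) (-(x / t)) x := by
      refine (((hasDerivAt_pow 2 x).fun_neg).div_const (2 * t)).congr_deriv ?_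
      rcases eq_or_ne t 0 with rfl | h
      · simp
      · field_simp; simp
    refine ((h1.exp).div_const (Real.sqrt (2 * Real.pi * t))).congr_deriv ?_
    ring
  exact this.deriv

theorem heatK''_eq (t x : ℝ) : heatK'' t x = (x ^ 2 / t ^ 2 - 1 / t) * heatK t x := by
  have h0 : ∀ x, HasDerivAt (fun y => heatK t y) (-(x / t) * heatK t x) x := by
    intro x
    rw [← heatK'_eq]
    unfold heatK' 
    apply DifferentiableAt.hasDerivAt
    unfold heatK; fun_prop
  have : HasDerivAt (deriv fun y => heatK t y) ((x ^ 2 / t ^ 2 - 1 / t) * heatK t x) x := by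
    have : (deriv fun y => heatK t y) = fun y => -(y / t) * heatK t y := by
      ext y; exact (h0 y).deriv
    rw [this]
    refine ((((hasDerivAt_id' x).div_const t).fun_neg).fun_mul (h0 x)).congr_deriv ?_
    ring
  exact this.deriv

/-- The heat equation `∂ₛ q_s = q_s'' / 2`. -/
theorem hasDerivAt_heatK_time {s : ℝ} (hs : 0 < s) (x : ℝ) :
    HasDerivAt (fun s => heatK s x) (heatK'' s x / 2) s := by
  rw [heatK''_eq]
  unfold heatK
  have hp : 0 < 2 * Real.pi * s := by positivity
  have h1 : HasDerivAt (fun s : ℝ => -x ^ 2 / (2 * s)) (x ^ 2 / (2 * s ^ 2)) s := by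
    refine ((hasDerivAt_const s (-x ^ 2)).fun_div ((hasDerivAt_id' s).const_mul 2)
      (by simpa using hs.ne')).congr_deriv ?_
    field_simp; ring
  have h2 : HasDerivAt (fun s : ℝ => Real.sqrt (2 * Real.pi * s))
      ((2 * Real.pi) / (2 * Real.sqrt (2 * Real.pi * s))) s := by
    refine (((hasDerivAt_id' s).const_mul (2 * Real.pi)).sqrt hp.ne').congr_deriv ?_
    simp
  have hq : 0 < Real.sqrt (2 * Real.pi * s) := Real.sqrt_pos.2 hp
  refine (h1.exp.fun_div h2 hq.ne').congr_deriv ?_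
  have hsq : Real.sqrt (2 * Real.pi * s) ^ 2 = 2 * Real.pi * s := Real.sq_sqrt hp.le
  set q := Real.sqrt (2 * Real.pi * s)
  field_simp
  rw [hsq]
  field_simp

theorem measurable_heatK : Measurable fun p : ℝ × ℝ => heatK p.1 p.2 := by
  unfold heatK; fun_prop

theorem measurable_heatK' : Measurable fun p : ℝ × ℝ => heatK' p.1 p.2 := by
  simp only [heatK'_eq]; have := measurable_heatK; fun_prop

theorem measurable_heatK'' : Measurable fun p : ℝ × ℝ => heatK'' p.1 p.2 := by
  simp only [heatK''_eq]; have := measurable_heatK; fun_prop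

theorem heatK_nonneg_s8 (t x : ℝ) : 0 ≤ heatK t x := by
  unfold heatK; positivity

theorem heatK_eq_gaussianPDFReal {t : ℝ} (ht : 0 < t) :
    heatK t = ProbabilityTheory.gaussianPDFReal 0 t.toNNReal := by
  ext x
  simp only [heatK, ProbabilityTheory.gaussianPDFReal, Real.coe_toNNReal t ht.le, sub_zero]; ring

theorem integrable_heatK {t : ℝ} (ht : 0 < t) : Integrable (heatK t) := by
  rw [heatK_eq_gaussianPDFReal ht]; exact ProbabilityTheory.integrable_gaussianPDFReal _ _

theorem integral_heatK {t : ℝ} (ht : 0 < t) : ∫ x, heatK t x = 1 := by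
  rw [heatK_eq_gaussianPDFReal ht]
  apply ProbabilityTheory.integral_gaussianPDFReal_eq_one
  exact (Real.toNNReal_pos.2 ht).ne'

theorem integrable_heatK' {t : ℝ} (ht : 0 < t) : Integrable (heatK' t) := by
  have h := (integrable_mul_exp_neg_mul_sq (b := 1 / (2 * t)) (by positivity)).const_mul
    (-(1 / t) * (1 / Real.sqrt (2 * Real.pi * t)))
  refine h.congr (Filter.Eventually.of_forall fun x => ?_)
  simp only [heatK'_eq, heatK]
  rw [show -(1 / (2 * t)) * x ^ 2 = -x ^ 2 / (2 * t) by ring]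
  ring

/-- `‖q_t'‖₁ = 2 q_t(0) = √(2 / (π t)) ≤ t^{-1/2}`. -/
theorem integral_abs_heatK'_le {t : ℝ} (ht : 0 < t) :
    ∫ x, |heatK' t x| ≤ 1 / Real.sqrt t := by
  have hb : 0 < 1 / (2 * t) := by positivity
  obtain ⟨F, hF⟩ : ∃ F : ℝ → ℝ, F = fun y : ℝ => (1 / t * (1 / Real.sqrt (2 * Real.pi * t))) *
      (y ^ (1 : ℝ) * Real.exp (-(1 / (2 * t)) * y ^ (2 : ℝ))) := ⟨_, rfl⟩
  have h1 : ∀ x, |heatK' t x| = F |x| := by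
    intro x
    rw [heatK'_eq, abs_mul, abs_neg, abs_div, abs_of_pos ht, abs_of_nonneg (heatK_nonneg_s8 t x), hF]
    simp only [heatK, Real.rpow_one, Real.rpow_two, sq_abs]
    rw [show -(1 / (2 * t)) * x ^ 2 = -x ^ 2 / (2 * t) by ring]
    ring
  simp_rw [h1]
  rw [integral_comp_abs, hF, MeasureTheory.integral_const_mul,
    integral_rpow_mul_exp_neg_mul_rpow (by norm_num) (by norm_num) hb]
  norm_num
  rw [show (-1 : ℝ) = ((-1 : ℤ) : ℝ) by norm_num, Real.rpow_intCast]
  have hs : 0 < Real.sqrt t := Real.sqrt_pos.2 ht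
  have hsp : 0 < Real.sqrt Real.pi := Real.sqrt_pos.2 Real.pi_pos
  field_simp
  apply Real.le_sqrt_of_sq_le
  rw [mul_pow, Real.sq_sqrt ht.le]
  nlinarith [Real.pi_gt_three]

/-- On time intervals bounded away from `0`, `q_s''` has an integrable majorant that does not
depend on `s`. -/
theorem exists_heatK''_majorant {α β : ℝ} (hα : 0 < α) (hαβ : α ≤ β) :
    ∃ D : ℝ → ℝ, Integrable D ∧ ∀ s ∈ Set.Icc α β, ∀ x, |heatK'' s x| ≤ D x := by
  have hβ : 0 < β := hα.trans_le hαβ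
  have hb : 0 < 1 / (2 * β) := by positivity
  refine ⟨fun x => (x ^ 2 / α ^ 2 + 1 / α) *
    (Real.exp (-(1 / (2 * β)) * x ^ 2) / Real.sqrt (2 * Real.pi * α)), ?_, ?_⟩
  · have h2 := integrable_rpow_mul_exp_neg_mul_sq hb (s := 2) (by norm_num)
    have h0 := integrable_exp_neg_mul_sq hb
    refine ((h2.const_mul (1 / α ^ 2 / Real.sqrt (2 * Real.pi * α))).add
      (h0.const_mul (1 / α / Real.sqrt (2 * Real.pi * α)))).congr
      (Filter.Eventually.of_forall fun x => ?_)
    simp only [Real.rpow_two, Pi.add_apply]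
    ring
  · rintro s ⟨h1, h2⟩ x
    have hs : 0 < s := hα.trans_le h1
    rw [heatK''_eq, abs_mul, abs_of_nonneg (heatK_nonneg_s8 s x)]
    have hle : |x ^ 2 / s ^ 2 - 1 / s| ≤ x ^ 2 / α ^ 2 + 1 / α := by
      refine (abs_sub _ _).trans ?_
      rw [abs_of_nonneg (by positivity), abs_of_nonneg (by positivity)]
      gcongr
    refine mul_le_mul hle ?_ (heatK_nonneg_s8 s x) (by positivity)
    unfold heatK
    have hexp : -x ^ 2 / (2 * s) ≤ -(1 / (2 * β)) * x ^ 2 := by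
      rw [neg_div, neg_mul, neg_le_neg_iff, one_div_mul_eq_div]
      gcongr
    gcongr

theorem continuousOn_heatK''_time (x : ℝ) :
    ContinuousOn (fun s => heatK'' s x) (Set.Ioi 0) := by
  simp only [heatK''_eq, heatK]
  intro s hs
  have hs : 0 < s := hs
  have hq : Real.sqrt (2 * Real.pi * s) ≠ 0 := (Real.sqrt_pos.2 (by positivity)).ne'
  apply ContinuousAt.continuousWithinAt
  fun_prop (disch := first | assumption | positivity)

theorem integral_heatK''_time {α β : ℝ} (hα : 0 < α) (hαβ : α ≤ β) (x : ℝ) :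
    ∫ s in α..β, heatK'' s x = 2 * (heatK β x - heatK α x) := by
  have hsub : Set.uIcc α β ⊆ Set.Ioi 0 := by
    rw [Set.uIcc_of_le hαβ]; exact fun s hs => hα.trans_le hs.1
  rw [integral_eq_sub_of_hasDerivAt (f := fun s => 2 * heatK s x)]
  · ring
  · intro s hs
    exact ((hasDerivAt_heatK_time (hsub hs) x).const_mul 2).congr_deriv (by ring)
  · exact ((continuousOn_heatK''_time x).mono hsub).intervalIntegrable

/-- Convolution against an `L¹` kernel: sup bound. -/
theorem abs_integral_mul_comp_sub_le {f g : ℝ → ℝ} {M : ℝ} (hg : Integrable g)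
    (hf : ∀ x, |f x| ≤ M) (y : ℝ) :
    |∫ z, f z * g (z - y)| ≤ M * ∫ x, |g x| := by
  rw [← Real.norm_eq_abs (∫ z, f z * g (z - y)), ← MeasureTheory.integral_const_mul,
    ← integral_sub_right_eq_self (fun x => M * |g x|) y]
  refine MeasureTheory.norm_integral_le_of_norm_le ((hg.abs.const_mul M).comp_sub_right y)
    (Filter.Eventually.of_forall fun z => ?_)
  rw [Real.norm_eq_abs, abs_mul]
  exact mul_le_mul_of_nonneg_right (hf z) (abs_nonneg _)

/-! ### Time integrals -/

theorem integrableOn_one_div_sqrt (T : ℝ) :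
    IntegrableOn (fun x => 1 / Real.sqrt x) (Set.Ioc 0 T) := by
  refine integrableOn_deriv_of_nonneg (g := fun x => 2 * Real.sqrt x) (by fun_prop) ?_ ?_
  · intro x hx
    exact ((Real.hasDerivAt_sqrt hx.1.ne').const_mul 2).congr_deriv (by field_simp)
  · intro x _; positivity

theorem integral_one_div_sqrt {T : ℝ} (hT : 0 ≤ T) :
    ∫ x in Set.Ioc 0 T, 1 / Real.sqrt x = 2 * Real.sqrt T := by
  rw [← intervalIntegral.integral_of_le hT,
    integral_eq_sub_of_hasDerivAt_of_le (f := fun x => 2 * Real.sqrt x) hT (by fun_prop)]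
  · simp
  · intro x hx
    exact ((Real.hasDerivAt_sqrt hx.1.ne').const_mul 2).congr_deriv (by field_simp)
  · rw [intervalIntegrable_iff_integrableOn_Ioc_of_le hT]
    exact integrableOn_one_div_sqrt T

/-- The arcsine integral: a primitive is `arcsin ((2 x - a - c) / (c - a))`, and it is the
nonnegativity of the integrand that makes it integrable up to the endpoints. -/
theorem integral_arcsine {a c : ℝ} (hac : a < c) :
    ∫ x in a..c, 1 / Real.sqrt ((x - a) * (c - x)) = Real.pi := by
  have hd : ∀ x ∈ Set.Ioo a c, HasDerivAt (fun x => Real.arcsin ((2 * x - a - c) / (c - a)))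
      (1 / Real.sqrt ((x - a) * (c - x))) x := by
    intro x hx
    have h0 : 0 < c - a := sub_pos.2 hac
    have h1 : 0 < x - a := sub_pos.2 hx.1
    have h2 : 0 < c - x := sub_pos.2 hx.2
    have hin : HasDerivAt (fun x => (2 * x - a - c) / (c - a)) (2 / (c - a)) x := by
      refine (((((hasDerivAt_id' x).const_mul 2).sub_const a).sub_const c).div_const
        (c - a)).congr_deriv (by ring)
    refine (HasDerivAt.comp x (Real.hasDerivAt_arcsin ?_ ?_) hin).congr_deriv ?_
    · apply ne_of_gt; rw [lt_div_iff₀ h0]; linarith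
    · apply ne_of_lt; rw [div_lt_iff₀ h0]; linarith
    · have : 1 - ((2 * x - a - c) / (c - a)) ^ 2 = (2 / (c - a)) ^ 2 * ((x - a) * (c - x)) := by
        field_simp; ring
      rw [this, Real.sqrt_mul (by positivity), Real.sqrt_sq (by positivity)]
      have : 0 < Real.sqrt ((x - a) * (c - x)) := Real.sqrt_pos.2 (by positivity)
      field_simp
  have hc : ContinuousOn (fun x => Real.arcsin ((2 * x - a - c) / (c - a))) (Set.Icc a c) := by
    fun_prop
  have hca : c - a ≠ 0 := (sub_pos.2 hac).ne'
  rw [integral_eq_sub_of_hasDerivAt_of_le hac.le hc hd]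
  · rw [show (2 * c - a - c) / (c - a) = 1 by field_simp; ring,
      show (2 * a - a - c) / (c - a) = -1 by field_simp; ring]
    simp
  · rw [intervalIntegrable_iff_integrableOn_Ioc_of_le hac.le]
    exact integrableOn_deriv_of_nonneg hc hd fun x _ => by positivity

/-- The integration over the time increments `0 < r, u` and `ε < σ` with `σ + r + u ≤ T`. The
crude bound `hbd` only serves to justify Fubini; the estimate comes from integrating in `σ` first,
where `hint` gives a bound that does not degenerate as `ε → 0`, and from
`∫₀ᵀ∫₀ᵀ (r u)^{-1/2} du dr = 4 T`. -/
theorem abs_time_integral_le {w : ℝ → ℝ → ℝ → ℝ} {ε T C M : ℝ} (hε : 0 < ε) (hεT : ε ≤ T)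
    (hw : Measurable fun p : ℝ × ℝ × ℝ => w p.1 p.2.1 p.2.2) (hC : 0 ≤ C) (hM : 0 ≤ M)
    (hbd : ∀ σ ∈ Set.Ioc ε T, ∀ r, 0 < r → ∀ u, 0 < u →
      |w σ r u| ≤ C * (1 / Real.sqrt r * (1 / Real.sqrt u)))
    (hint : ∀ β, ε ≤ β → β ≤ T → ∀ r, 0 < r → ∀ u, 0 < u →
      |∫ σ in ε..β, w σ r u| ≤ M * (1 / Real.sqrt r * (1 / Real.sqrt u))) :
    |∫ σ in ε..T, ∫ r in 0..(T - σ), ∫ u in 0..(T - σ - r), w σ r u| ≤ 4 * M * T := by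
  have hT : 0 < T := hε.trans_le hεT
  set ν : Measure ℝ := volume.restrict (Set.Ioc 0 T) with hν
  set μ : Measure ℝ := volume.restrict (Set.Ioc ε T) with hμ
  let f : ℝ → ℝ × ℝ → ℝ := fun σ p => if σ + p.1 + p.2 ≤ T then w σ p.1 p.2 else 0
  have hfm : Measurable (Function.uncurry f) := by
    refine Measurable.ite (measurableSet_le (by fun_prop) (by fun_prop)) ?_ measurable_const
    exact hw
  have hI : Integrable (fun x => 1 / Real.sqrt x) ν := integrableOn_one_div_sqrt T
  have hg : Integrable (fun p : ℝ × ℝ => 1 / Real.sqrt p.1 * (1 / Real.sqrt p.2)) (ν.prod ν) :=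
    hI.mul_prod hI
  have hνν : ∀ᵐ p ∂(ν.prod ν), 0 < p.1 ∧ 0 < p.2 := by
    rw [hν, Measure.prod_restrict]
    filter_upwards [ae_restrict_mem (measurableSet_Ioc.prod measurableSet_Ioc)] with p hp
    exact ⟨hp.1.1, hp.2.1⟩
  have hfb : ∀ σ ∈ Set.Ioc ε T, ∀ p : ℝ × ℝ, 0 < p.1 → 0 < p.2 →
      ‖f σ p‖ ≤ C * (1 / Real.sqrt p.1 * (1 / Real.sqrt p.2)) := by
    intro σ hσ p h1 h2
    simp only [f]
    split_ifs
    · exact hbd σ hσ _ h1 _ h2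
    · simp; positivity
  have hslice : ∀ σ ∈ Set.Ioc ε T, Integrable (f σ) (ν.prod ν) := by
    intro σ hσ
    refine (hg.const_mul C).mono' (hfm.comp measurable_prodMk_left).aestronglyMeasurable ?_
    filter_upwards [hνν] with p hp
    exact hfb σ hσ p hp.1 hp.2
  have hfull : Integrable (Function.uncurry f) (μ.prod (ν.prod ν)) := by
    have h1 : Integrable (fun _ : ℝ => C) μ := integrable_const C
    refine (h1.mul_prod hg).mono' hfm.aestronglyMeasurable ?_
    have : ∀ᵐ q ∂(μ.prod (ν.prod ν)), q.1 ∈ Set.Ioc ε T ∧ 0 < q.2.1 ∧ 0 < q.2.2 := by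
      rw [hμ, hν, Measure.prod_restrict, Measure.prod_restrict]
      filter_upwards [ae_restrict_mem
        (measurableSet_Ioc.prod (measurableSet_Ioc.prod measurableSet_Ioc))] with q hq
      exact ⟨hq.1, hq.2.1.1, hq.2.2.1⟩
    filter_upwards [this] with q hq
    exact hfb q.1 hq.1 q.2 hq.2.1 hq.2.2
  -- the triangular time domain is encoded by the indicator in `f`
  have hrew : ∫ σ in ε..T, ∫ r in 0..(T - σ), ∫ u in 0..(T - σ - r), w σ r u
      = ∫ σ, ∫ p, f σ p ∂(ν.prod ν) ∂μ := by
    rw [intervalIntegral.integral_of_le hεT]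
    refine setIntegral_congr_fun measurableSet_Ioc fun σ hσ => ?_
    have hσ0 : 0 < σ := hε.trans hσ.1
    rw [integral_prod _ (hslice σ hσ), intervalIntegral.integral_of_le (by linarith [hσ.2])]
    have hin : ∀ r, 0 < r → ∫ u, f σ (r, u) ∂ν =
        (Set.Ioc 0 (T - σ)).indicator (fun r => ∫ u in 0..(T - σ - r), w σ r u) r := by
      intro r hr
      have hfr : ∀ u, f σ (r, u) = (Set.Iic (T - σ - r)).indicator (fun u => w σ r u) u := by
        intro u
        simp only [f, Set.indicator, Set.mem_Iic]
        congr 1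
        exact propext ⟨fun h => by linarith, fun h => by linarith⟩
      simp_rw [hfr]
      rw [hν, setIntegral_indicator measurableSet_Iic, Set.Ioc_inter_Iic]
      by_cases hrT : r ≤ T - σ
      · rw [Set.indicator_of_mem (show r ∈ Set.Ioc 0 (T - σ) from ⟨hr, hrT⟩),
          min_eq_right (by linarith), intervalIntegral.integral_of_le (by linarith)]
      · rw [Set.indicator_of_notMem (fun h => hrT h.2), Set.Ioc_eq_empty, setIntegral_empty]
        simp only [not_lt]
        exact (min_le_right _ _).trans (by linarith [not_le.1 hrT])
    have : ∫ r, ∫ u, f σ (r, u) ∂ν ∂ν = ∫ r in Set.Ioc 0 T,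
        (Set.Ioc 0 (T - σ)).indicator (fun r => ∫ u in 0..(T - σ - r), w σ r u) r :=
      setIntegral_congr_fun measurableSet_Ioc fun r hr => hin r hr.1
    rw [this, setIntegral_indicator measurableSet_Ioc, Set.inter_eq_right.2]
    exact Set.Ioc_subset_Ioc_right (by linarith)
  rw [hrew, integral_integral_swap hfull]
  have hval : ∫ p : ℝ × ℝ, M * (1 / Real.sqrt p.1 * (1 / Real.sqrt p.2)) ∂(ν.prod ν)
      = 4 * M * T := by
    rw [MeasureTheory.integral_const_mul,
      integral_prod_mul (fun x => 1 / Real.sqrt x) (fun x => 1 / Real.sqrt x), hν,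
      integral_one_div_sqrt hT.le]
    linear_combination (4 * M) * Real.mul_self_sqrt hT.le
  rw [← hval]
  rw [← Real.norm_eq_abs]
  refine MeasureTheory.norm_integral_le_of_norm_le (hg.const_mul M) ?_
  filter_upwards [hνν] with p hp
  have hfr : ∀ σ, f σ p = (Set.Iic (T - p.1 - p.2)).indicator (fun σ => w σ p.1 p.2) σ := by
    intro σ
    simp only [f, Set.indicator, Set.mem_Iic]
    congr 1
    exact propext ⟨fun h => by linarith, fun h => by linarith⟩
  simp_rw [hfr]
  rw [hμ, setIntegral_indicator measurableSet_Iic, Set.Ioc_inter_Iic,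
    min_eq_right (by linarith [hp.1, hp.2])]
  rcases le_or_gt ε (T - p.1 - p.2) with h | h
  · rw [← intervalIntegral.integral_of_le h]
    exact hint _ h (by linarith [hp.1, hp.2]) _ hp.1 _ hp.2
  · rw [Set.Ioc_eq_empty (by linarith), setIntegral_empty, norm_zero]
    positivity

/-! ### Spatial integrals -/

/-- The operator `f ↦ ∫ f(z) q_u'(z - ·) dz`. -/
noncomputable def heatConv' (f : ℝ → ℝ) (u y : ℝ) : ℝ := ∫ z, f z * heatK' u (z - y)

theorem abs_heatConv'_le {f : ℝ → ℝ} {M u : ℝ} (hM : 0 ≤ M) (hf : ∀ x, |f x| ≤ M) (hu : 0 < u)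
    (y : ℝ) : |heatConv' f u y| ≤ M * (1 / Real.sqrt u) :=
  (abs_integral_mul_comp_sub_le (integrable_heatK' hu) hf y).trans
    (mul_le_mul_of_nonneg_left (integral_abs_heatK'_le hu) hM)

/-- The cancellation estimate: integrating the non-integrable singularity `q_σ''` in time gives
`2 (q_β - q_ε)`, whose `L¹` norm is at most `4`, uniformly in `ε`. -/
theorem abs_integral_heatK''_time_le {h ρ : ℝ → ℝ} {M ε β : ℝ} (hh : Measurable h)
    (hhM : ∀ x, |h x| ≤ M) (hρ : Integrable ρ) (hε : 0 < ε) (hεβ : ε ≤ β) :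
    |∫ σ in ε..β, ∫ y₁, ρ y₁ * ∫ y₂, h y₂ * heatK'' σ (y₂ - y₁)| ≤ 4 * M * ∫ y, |ρ y| := by
  obtain ⟨D, hD, hDb⟩ := exists_heatK''_majorant hε hεβ
  have hM : 0 ≤ M := (abs_nonneg _).trans (hhM 0)
  have hβ : 0 < β := hε.trans_le hεβ
  set μ : Measure ℝ := volume.restrict (Set.Ioc ε β) with hμ
  have hone : Integrable (fun _ : ℝ => (1 : ℝ)) μ := integrable_const 1
  have hker := measurable_heatK''
  have hkint : ∀ σ ∈ Set.Ioc ε β, Integrable (heatK'' σ) := fun σ hσ =>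
    hD.mono' (hker.comp measurable_prodMk_left).aestronglyMeasurable
      (Filter.Eventually.of_forall fun x => hDb σ (Set.Ioc_subset_Icc_self hσ) x)
  have hμ1 : ∀ ν : Measure ℝ, SFinite ν → ∀ᵐ q ∂(μ.prod ν), q.1 ∈ Set.Ioc ε β := by
    intro ν _
    rw [hμ, ← Measure.restrict_univ (μ := ν), Measure.prod_restrict]
    filter_upwards [ae_restrict_mem (measurableSet_Ioc.prod MeasurableSet.univ)] with q hq
    exact hq.1
  have hinner : ∀ y₁, ∫ σ, ∫ y₂, h y₂ * heatK'' σ (y₂ - y₁) ∂volume ∂μ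
      = ∫ y₂, h y₂ * (2 * (heatK β (y₂ - y₁) - heatK ε (y₂ - y₁))) := by
    intro y₁
    have hi : Integrable (Function.uncurry fun σ y₂ => h y₂ * heatK'' σ (y₂ - y₁))
        (μ.prod volume) := by
      refine (hone.mul_prod ((hD.comp_sub_right y₁).const_mul M)).mono'
        (Measurable.aestronglyMeasurable ?_) ?_
      · unfold Function.uncurry
        exact (hh.comp measurable_snd).mul
          (hker.comp (measurable_fst.prodMk (measurable_snd.sub_const y₁)))
      · filter_upwards [hμ1 volume inferInstance] with q hq
        simp only [Function.uncurry, norm_mul, Real.norm_eq_abs, one_mul]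
        exact mul_le_mul (hhM _) (hDb _ (Set.Ioc_subset_Icc_self hq) _) (abs_nonneg _) hM
    rw [integral_integral_swap hi]
    refine integral_congr_ae (Filter.Eventually.of_forall fun y₂ => ?_)
    simp only
    rw [MeasureTheory.integral_const_mul, hμ, ← intervalIntegral.integral_of_le hεβ,
      integral_heatK''_time hε hεβ]
  have houter : Integrable (Function.uncurry fun σ y₁ =>
      ρ y₁ * ∫ y₂, h y₂ * heatK'' σ (y₂ - y₁)) (μ.prod volume) := by
    have hN : StronglyMeasurable fun q : ℝ × ℝ => ∫ y₂, h y₂ * heatK'' q.1 (y₂ - q.2) := by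
      refine StronglyMeasurable.integral_prod_right
        (f := fun (q : ℝ × ℝ) y₂ => h y₂ * heatK'' q.1 (y₂ - q.2)) ?_
      apply Measurable.stronglyMeasurable
      unfold Function.uncurry
      exact (hh.comp measurable_snd).mul (hker.comp
        (measurable_fst.fst.prodMk (measurable_snd.sub measurable_fst.snd)))
    refine (hone.mul_prod (hρ.abs.mul_const (M * ∫ x, D x))).mono' ?_ ?_
    · exact hρ.aestronglyMeasurable.comp_snd.mul hN.aestronglyMeasurable
    · filter_upwards [hμ1 volume inferInstance] with q hq
      simp only [Function.uncurry, norm_mul, Real.norm_eq_abs, one_mul]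
      refine mul_le_mul_of_nonneg_left ?_ (abs_nonneg _)
      refine (abs_integral_mul_comp_sub_le (hkint _ hq) hhM _).trans ?_
      exact mul_le_mul_of_nonneg_left (integral_mono (hkint _ hq).abs hD
        fun x => hDb _ (Set.Ioc_subset_Icc_self hq) x) hM
  rw [intervalIntegral.integral_of_le hεβ, integral_integral_swap houter,
    ← MeasureTheory.integral_const_mul, ← Real.norm_eq_abs]
  refine MeasureTheory.norm_integral_le_of_norm_le (hρ.abs.const_mul _)
    (Filter.Eventually.of_forall fun y₁ => ?_)
  rw [MeasureTheory.integral_const_mul, hinner y₁, norm_mul, Real.norm_eq_abs, Real.norm_eq_abs,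
    mul_comm]
  refine mul_le_mul_of_nonneg_right ?_ (abs_nonneg _)
  have hdiff := (integrable_heatK hβ).sub (integrable_heatK hε)
  refine (abs_integral_mul_comp_sub_le (hdiff.const_mul 2) hhM y₁).trans ?_
  rw [mul_comm 4 M]
  refine mul_le_mul_of_nonneg_left ?_ hM
  have hsum := ((integrable_heatK hβ).add (integrable_heatK hε)).const_mul 2
  calc ∫ x, |2 * (heatK β - heatK ε) x| ≤ ∫ x, 2 * (heatK β + heatK ε) x := by
        refine integral_mono (hdiff.const_mul 2).abs hsum fun x => ?_
        simp only [Pi.sub_apply, Pi.add_apply, abs_mul, abs_two]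
        have := abs_sub (heatK β x) (heatK ε x)
        rw [abs_of_nonneg (heatK_nonneg_s8 β x), abs_of_nonneg (heatK_nonneg_s8 ε x)] at this
        linarith
    _ = 4 := by
        rw [MeasureTheory.integral_const_mul, integral_add' (integrable_heatK hβ)
          (integrable_heatK hε), integral_heatK hβ, integral_heatK hε]
        norm_num

/-- The spatial part of `J₆`, as a function of the time increments `σ = s₂ - s₁`, `r = s₃ - s₂`,
`u = s₄ - s₃`, with each factor pulled out of the integrals that do not involve it. -/
noncomputable def spatialPart (b : ℝ → ℝ) (s σ r u : ℝ) : ℝ :=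
  ∫ y₁, (b y₁ * heatK s y₁) *
    ∫ y₂, (b y₂ * heatConv' (fun z => b z * heatConv' b u z) r y₂) * heatK'' σ (y₂ - y₁)

theorem spatialPart_eq (b : ℝ → ℝ) (s₁ s₂ s₃ s₄ : ℝ) :
    (∫ y₁ : ℝ, ∫ y₂ : ℝ, ∫ y₃ : ℝ, ∫ y₄ : ℝ,
          b y₁ * b y₂ * b y₃ * b y₄ * heatK s₁ y₁ * heatK'' (s₂ - s₁) (y₂ - y₁)
            * heatK' (s₃ - s₂) (y₃ - y₂) * heatK' (s₄ - s₃) (y₄ - y₃))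
      = spatialPart b s₁ (s₂ - s₁) (s₃ - s₂) (s₄ - s₃) := by
  unfold spatialPart heatConv'
  refine integral_congr_ae (Filter.Eventually.of_forall fun y₁ => ?_)
  simp only
  rw [← MeasureTheory.integral_const_mul]
  refine integral_congr_ae (Filter.Eventually.of_forall fun y₂ => ?_)
  simp only
  rw [mul_right_comm (b y₂), ← mul_assoc, ← MeasureTheory.integral_const_mul]
  refine integral_congr_ae (Filter.Eventually.of_forall fun y₃ => ?_)
  simp only
  rw [mul_right_comm (b y₃), ← mul_assoc, ← MeasureTheory.integral_const_mul]
  refine integral_congr_ae (Filter.Eventually.of_forall fun y₄ => ?_)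
  simp only
  ring

/-! ### Measurability in the parameters -/

theorem Measurable.heatK'' {α : Type*} [MeasurableSpace α] {f g : α → ℝ} (hf : Measurable f)
    (hg : Measurable g) : Measurable fun a => _root_.heatK'' (f a) (g a) := by
  have h : Measurable fun a => heatK (f a) (g a) := measurable_heatK.comp (hf.prodMk hg)
  simp only [heatK''_eq]
  fun_prop

theorem Measurable.heatK' {α : Type*} [MeasurableSpace α] {f g : α → ℝ} (hf : Measurable f)
    (hg : Measurable g) : Measurable fun a => _root_.heatK' (f a) (g a) :=
  measurable_heatK'.comp (hf.prodMk hg)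

theorem Measurable.integral_snd {α : Type*} [MeasurableSpace α] {f : α → ℝ → ℝ}
    (hf : Measurable fun p : α × ℝ => f p.1 p.2) : Measurable fun a => ∫ z, f a z :=
  (StronglyMeasurable.integral_prod_right (f := f) hf.stronglyMeasurable).measurable

theorem Measurable.heatConv' {α : Type*} [MeasurableSpace α] {f : α → ℝ → ℝ} {u y : α → ℝ}
    (hf : Measurable fun p : α × ℝ => f p.1 p.2) (hu : Measurable u) (hy : Measurable y) :
    Measurable fun a => _root_.heatConv' (f a) (u a) (y a) :=
  Measurable.integral_snd (f := fun a z => f a z * _root_.heatK' (u a) (z - y a))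
    (hf.mul (Measurable.heatK' (hu.comp measurable_fst)
      (measurable_snd.sub (hy.comp measurable_fst))))

/-- The function of `y₂` (and of the parameters `r`, `u`) that multiplies `q_σ''(y₂ - y₁)` in
`spatialPart`. -/
theorem measurable_inner_factor {b : ℝ → ℝ} (hb : Measurable b) {α : Type*} [MeasurableSpace α]
    {r u y : α → ℝ} (hr : Measurable r) (hu : Measurable u) (hy : Measurable y) :
    Measurable fun a => b (y a) *
      heatConv' (fun z => b z * heatConv' b (u a) z) (r a) (y a) := by
  refine (hb.comp hy).mul (Measurable.heatConv' ?_ hr hy)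
  exact (hb.comp measurable_snd).mul (Measurable.heatConv' (f := fun _ => b)
    (hb.comp measurable_snd) (hu.comp measurable_fst) measurable_snd)

theorem measurable_spatialPart {b : ℝ → ℝ} (hb : Measurable b) (s : ℝ) :
    Measurable fun p : ℝ × ℝ × ℝ => spatialPart b s p.1 p.2.1 p.2.2 := by
  have h3 : Measurable fun p : (ℝ × ℝ × ℝ) × ℝ =>
      ∫ y₂, (b y₂ * heatConv' (fun z => b z * heatConv' b p.1.2.2 z) p.1.2.1 y₂) *
        heatK'' p.1.1 (y₂ - p.2) := by
    apply Measurable.integral_snd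
    refine (measurable_inner_factor hb ?_ ?_ ?_).mul (Measurable.heatK'' ?_ ?_) <;> fun_prop
  have h4 : Measurable fun y => heatK s y := by unfold heatK; fun_prop
  apply Measurable.integral_snd
  exact ((hb.comp measurable_snd).mul (h4.comp measurable_snd)).mul h3

/-! ### The estimate -/

/-- The `s₂`-integral, in increment variables and cut off at distance `ε` from the singularity,
is bounded uniformly in `ε`. -/
theorem abs_truncated_le {b : ℝ → ℝ} (hb : Measurable b) {B : ℝ} (hB : ∀ x, |b x| ≤ B)
    {s ε T : ℝ} (hs : 0 < s) (hε : 0 < ε) (hεT : ε ≤ T) :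
    |∫ σ in ε..T, ∫ r in 0..(T - σ), ∫ u in 0..(T - σ - r), spatialPart b s σ r u|
      ≤ 16 * B ^ 4 * T := by
  obtain ⟨D, hD, hDb⟩ := exists_heatK''_majorant hε hεT
  have hB0 : 0 ≤ B := (abs_nonneg _).trans (hB 0)
  have hD0 : 0 ≤ ∫ x, D x := integral_nonneg fun x =>
    (abs_nonneg _).trans (hDb ε ⟨le_rfl, hεT⟩ x)
  have hρ : Integrable fun y => b y * heatK s y :=
    (integrable_heatK hs).bdd_mul hb.aestronglyMeasurable (Filter.Eventually.of_forall hB)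
  have hρB : ∫ y, |b y * heatK s y| ≤ B := by
    calc ∫ y, |b y * heatK s y| ≤ ∫ y, B * heatK s y := by
          refine integral_mono hρ.abs ((integrable_heatK hs).const_mul B) fun y => ?_
          simp only [abs_mul, abs_of_nonneg (heatK_nonneg_s8 s y)]
          exact mul_le_mul_of_nonneg_right (hB y) (heatK_nonneg_s8 s y)
      _ = B := by rw [MeasureTheory.integral_const_mul, integral_heatK hs, mul_one]
  have hmul : ∀ {g : ℝ → ℝ} {M : ℝ}, (∀ x, |g x| ≤ M) → ∀ x, |b x * g x| ≤ B * M := by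
    intro g M hg x
    rw [abs_mul]
    exact mul_le_mul (hB x) (hg x) (abs_nonneg _) hB0
  have hh : ∀ r, 0 < r → ∀ u, 0 < u → ∀ y,
      |b y * heatConv' (fun z => b z * heatConv' b u z) r y|
        ≤ B ^ 3 * (1 / Real.sqrt r * (1 / Real.sqrt u)) := by
    intro r hr u hu y
    have h1 := hmul (abs_heatConv'_le hB0 hB hu)
    have h2 := hmul (abs_heatConv'_le (by positivity) h1 hr) y
    refine h2.trans_eq (by ring)
  have key := abs_time_integral_le (w := spatialPart b s) (C := B ^ 4 * ∫ x, D x)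
    (M := 4 * B ^ 4) hε hεT (measurable_spatialPart hb s) (by positivity) (by positivity) ?_ ?_
  · linarith
  · intro σ hσ r hr u hu
    have hσ' := Set.Ioc_subset_Icc_self hσ
    have hk : Integrable (heatK'' σ) :=
      hD.mono' (measurable_heatK''.comp measurable_prodMk_left).aestronglyMeasurable
        (Filter.Eventually.of_forall fun x => hDb σ hσ' x)
    have hkD : ∫ x, |heatK'' σ x| ≤ ∫ x, D x :=
      integral_mono hk.abs hD fun x => hDb _ hσ' x
    set K := B ^ 3 * (1 / Real.sqrt r * (1 / Real.sqrt u)) with hK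
    have hK0 : 0 ≤ K := by positivity
    have : ‖spatialPart b s σ r u‖ ≤ ∫ y, |b y * heatK s y| * (K * ∫ x, D x) := by
      refine MeasureTheory.norm_integral_le_of_norm_le (hρ.abs.mul_const _)
        (Filter.Eventually.of_forall fun y => ?_)
      rw [norm_mul, Real.norm_eq_abs, Real.norm_eq_abs]
      refine mul_le_mul_of_nonneg_left ?_ (abs_nonneg _)
      exact (abs_integral_mul_comp_sub_le hk (hh r hr u hu) y).trans
        (mul_le_mul_of_nonneg_left hkD hK0)
    rw [MeasureTheory.integral_mul_const] at this
    refine this.trans ((mul_le_mul_of_nonneg_right hρB (by positivity)).trans_eq ?_)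
    rw [hK]; ring
  · intro β hεβ _ r hr u hu
    refine (abs_integral_heatK''_time_le (measurable_inner_factor hb measurable_const
      measurable_const measurable_id) (hh r hr u hu) hρ hε hεβ).trans ?_
    refine (mul_le_mul_of_nonneg_left hρB (by positivity)).trans_eq ?_
    ring

/-- For fixed `s₁`, the full `s₂`-integral. If the integrand fails to be integrable, its
Bochner integral is `0`; otherwise it is the limit of the truncated integrals. -/
theorem abs_inner_le_s8 {b : ℝ → ℝ} (hb : Measurable b) {B : ℝ} (hB : ∀ x, |b x| ≤ B)
    {s T : ℝ} (hs : 0 < s) (hT : 0 < T) :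
    |∫ σ in 0..T, ∫ r in 0..(T - σ), ∫ u in 0..(T - σ - r), spatialPart b s σ r u|
      ≤ 16 * B ^ 4 * T := by
  set F : ℝ → ℝ := fun σ => ∫ r in 0..(T - σ), ∫ u in 0..(T - σ - r), spatialPart b s σ r u
  by_cases hF : IntervalIntegrable F volume 0 T
  · have hc := continuousOn_primitive_interval_left (μ := volume) (f := F) (a := 0) (b := T) (by
      rw [Set.uIcc_of_le hT.le, integrableOn_Icc_iff_integrableOn_Ioc]
      exact (intervalIntegrable_iff_integrableOn_Ioc_of_le hT.le).1 hF)
    rw [Set.uIcc_of_le hT.le] at hc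
    have h0 : Filter.Tendsto (fun x => ∫ σ in x..T, F σ) (nhdsWithin 0 (Set.Ioc 0 T))
        (nhds (∫ σ in 0..T, F σ)) :=
      (hc 0 ⟨le_rfl, hT.le⟩).mono_left (nhdsWithin_mono _ Set.Ioc_subset_Icc_self)
    have hne : (nhdsWithin (0 : ℝ) (Set.Ioc 0 T)).NeBot := by
      rw [nhdsWithin_Ioc_eq_nhdsGT hT]; infer_instance
    refine le_of_tendsto h0.abs ?_
    filter_upwards [self_mem_nhdsWithin] with ε hε
    exact abs_truncated_le hb hB hs hε.1 hε.2
  · rw [intervalIntegral.integral_undef hF, abs_zero]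
    positivity

/-- for `b : ℝ → ℝ` bounded (by `B`) and continuous and `t > 0`, the quantity
`J₆ = ∫_0^t ∫_{s₁}^t ∫_{s₂}^t ∫_{s₃}^t ∫_{ℝ⁴} b(y₁)b(y₂)b(y₃)b(y₄)
  q_{s₁}(y₁) q''_{s₂−s₁}(y₂−y₁) q'_{s₃−s₂}(y₃−y₂) q'_{s₄−s₃}(y₄−y₃) dy ds` satisfies
`|J₆| ≤ 2³ ‖b‖_∞⁴ [∫_0^t ∫_{s₁}^t (s₂−s₁)^{−1/2} ∫_{s₂}^t (s₃−s₂)^{−1/2} ds₃ ds₂ ds₁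
  + ∫_0^t ∫_{s₁}^t ∫_{s₂}^t ((s₃−s₂)(t−s₃))^{−1/2} ds₃ ds₂ ds₁]`. -/
theorem abs_J_six_le (b : ℝ → ℝ) (hb : Continuous b) (B : ℝ) (hB : ∀ x, |b x| ≤ B)
    (t : ℝ) (ht : 0 < t) :
    |∫ s₁ in (0 : ℝ)..t, ∫ s₂ in s₁..t, ∫ s₃ in s₂..t, ∫ s₄ in s₃..t,
        ∫ y₁ : ℝ, ∫ y₂ : ℝ, ∫ y₃ : ℝ, ∫ y₄ : ℝ,
          b y₁ * b y₂ * b y₃ * b y₄ * heatK s₁ y₁ * heatK'' (s₂ - s₁) (y₂ - y₁)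
            * heatK' (s₃ - s₂) (y₃ - y₂) * heatK' (s₄ - s₃) (y₄ - y₃)|
      ≤ 2 ^ 3 * B ^ 4
          * ((∫ s₁ in (0 : ℝ)..t, ∫ s₂ in s₁..t, (1 / Real.sqrt (s₂ - s₁))
                * ∫ s₃ in s₂..t, 1 / Real.sqrt (s₃ - s₂))
            + ∫ s₁ in (0 : ℝ)..t, ∫ s₂ in s₁..t, ∫ s₃ in s₂..t,
                1 / Real.sqrt ((s₃ - s₂) * (t - s₃))) := by
  simp_rw [spatialPart_eq]
  -- pass to the time increments `σ = s₂ - s₁`, `r = s₃ - s₂`, `u = s₄ - s₃`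
  have hshift : ∀ s₁, (∫ s₂ in s₁..t, ∫ s₃ in s₂..t, ∫ s₄ in s₃..t,
      spatialPart b s₁ (s₂ - s₁) (s₃ - s₂) (s₄ - s₃)) =
      ∫ σ in 0..(t - s₁), ∫ r in 0..(t - s₁ - σ), ∫ u in 0..(t - s₁ - σ - r),
        spatialPart b s₁ σ r u := by
    intro s₁
    have h4 : ∀ s₂ s₃, ∫ s₄ in s₃..t, spatialPart b s₁ (s₂ - s₁) (s₃ - s₂) (s₄ - s₃)
        = ∫ u in 0..(t - s₃), spatialPart b s₁ (s₂ - s₁) (s₃ - s₂) u := by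
      intro s₂ s₃
      rw [intervalIntegral.integral_comp_sub_right
        (fun u => spatialPart b s₁ (s₂ - s₁) (s₃ - s₂) u), sub_self]
    have h3 : ∀ s₂, ∫ s₃ in s₂..t, ∫ s₄ in s₃..t,
        spatialPart b s₁ (s₂ - s₁) (s₃ - s₂) (s₄ - s₃)
        = ∫ r in 0..(t - s₂), ∫ u in 0..(t - s₂ - r), spatialPart b s₁ (s₂ - s₁) r u := by
      intro s₂
      have := intervalIntegral.integral_comp_sub_right (a := s₂) (b := t)
        (fun r => ∫ u in 0..(t - s₂ - r), spatialPart b s₁ (s₂ - s₁) r u) s₂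
      rw [sub_self] at this
      rw [← this]
      refine intervalIntegral.integral_congr fun s₃ _ => ?_
      rw [h4, sub_sub_sub_cancel_right]
    have := intervalIntegral.integral_comp_sub_right (a := s₁) (b := t)
      (fun σ => ∫ r in 0..(t - s₁ - σ), ∫ u in 0..(t - s₁ - σ - r), spatialPart b s₁ σ r u) s₁
    rw [sub_self] at this
    rw [← this]
    refine intervalIntegral.integral_congr fun s₂ _ => ?_
    rw [h3, sub_sub_sub_cancel_right]
  simp_rw [hshift]
  have hB0 : 0 ≤ B := (abs_nonneg _).trans (hB 0)
  have hleft : |∫ s₁ in (0 : ℝ)..t, ∫ σ in 0..(t - s₁), ∫ r in 0..(t - s₁ - σ),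
      ∫ u in 0..(t - s₁ - σ - r), spatialPart b s₁ σ r u| ≤ 8 * B ^ 4 * t ^ 2 := by
    have hval : ∫ s₁ in (0 : ℝ)..t, 16 * B ^ 4 * (t - s₁) = 8 * B ^ 4 * t ^ 2 := by
      rw [intervalIntegral.integral_const_mul,
        intervalIntegral.integral_sub (by simp) (by simp)]
      simp; ring
    rw [← hval, ← Real.norm_eq_abs]
    refine intervalIntegral.norm_integral_le_of_norm_le ht.le ?_
      (Continuous.intervalIntegrable (by fun_prop) _ _)
    filter_upwards [Measure.ae_ne volume t] with s₁ hne hs₁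
    exact abs_inner_le_s8 hb.measurable hB hs₁.1 (sub_pos.2 (lt_of_le_of_ne hs₁.2 hne))
  have hT1 : 0 ≤ ∫ s₁ in (0 : ℝ)..t, ∫ s₂ in s₁..t, (1 / Real.sqrt (s₂ - s₁))
      * ∫ s₃ in s₂..t, 1 / Real.sqrt (s₃ - s₂) := by
    refine intervalIntegral.integral_nonneg ht.le fun s₁ h₁ => ?_
    refine intervalIntegral.integral_nonneg h₁.2 fun s₂ h₂ => mul_nonneg (by positivity) ?_
    exact intervalIntegral.integral_nonneg h₂.2 fun s₃ _ => by positivity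
  have hT2 : ∫ s₁ in (0 : ℝ)..t, ∫ s₂ in s₁..t, ∫ s₃ in s₂..t,
      1 / Real.sqrt ((s₃ - s₂) * (t - s₃)) = Real.pi * t ^ 2 / 2 := by
    have h2 : ∀ s₁ ∈ Set.uIcc 0 t, ∫ s₂ in s₁..t, ∫ s₃ in s₂..t,
        1 / Real.sqrt ((s₃ - s₂) * (t - s₃)) = Real.pi * (t - s₁) := by
      intro s₁ h₁
      rw [Set.uIcc_of_le ht.le] at h₁
      have : ∫ s₂ in s₁..t, ∫ s₃ in s₂..t, 1 / Real.sqrt ((s₃ - s₂) * (t - s₃))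
          = ∫ _ in s₁..t, Real.pi := by
        refine intervalIntegral.integral_congr_ae ?_
        filter_upwards [Measure.ae_ne volume t] with s₂ hne hs₂
        rw [Set.uIoc_of_le h₁.2] at hs₂
        exact integral_arcsine (lt_of_le_of_ne hs₂.2 hne)
      rw [this, intervalIntegral.integral_const, smul_eq_mul, mul_comm]
    rw [intervalIntegral.integral_congr h2, intervalIntegral.integral_const_mul,
      intervalIntegral.integral_sub (by simp) (by simp)]
    simp; ring
  refine hleft.trans ?_
  rw [hT2]
  have hpi := Real.pi_gt_three
  have h1 : t ^ 2 ≤ Real.pi * t ^ 2 / 2 := by nlinarith [sq_nonneg t]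
  calc 8 * B ^ 4 * t ^ 2 = 2 ^ 3 * B ^ 4 * t ^ 2 := by norm_num
    _ ≤ _ := mul_le_mul_of_nonneg_left (by linarith) (by positivity)
end
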